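/- Let {ε_i} be i.i.d. Rademacher random variables and let S ⊂ X be as above with t = μ(S) ≤ 1/2, f = 1_S − 1_{−S}. Then for any v ∈ ℝ^n and p ≥ 2, I_p(v,f) ≥ A_p (2t)^{1/2} (Σ_{i=1}^n v_i^2)^{1/2}, and for 1 ≤ p ≤ 2, I_p(v,f) ≥ A_p (2t)^{1/p} (Σ_{i=1}^n v_i^2)^{1/2}, where A_p = min{1, 2^{1/2−1/p}, 2^{1/2}(Γ((p+1)/2)/√π)^{1/p}} is the optimal lower Khintchine constant. -/

import Mathlib

open MeasureTheory

/-!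
Since `f` is odd and `-` preserves `μ`, flipping the coordinates at random turns `∑ f(xᵢ) vᵢ` into
a Rademacher sum with coefficients `f(xᵢ) vᵢ`, so its moments may be bounded conditionally on `x`.
For `p ≥ 2` this gives the second moment `(∫ f²) ∑ vᵢ² = 2t ∑ vᵢ²`, and Jensen's inequality
suffices. For `p < 2` one applies Haagerup's sharp Khintchine inequality to `s = ∑ f(xᵢ)² vᵢ²` and
uses `s ^ (p/2) ≥ s V ^ (p/2 - 1)`, where `s ≤ V = ∑ vᵢ²`.

Haagerup's inequality follows the argument of Nazarov and Podkorytov. Up to a constant, `|x| ^ p` is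
`∫ (1 - cos (u x)) u ^ (-p-1) du`, so the `p`-th moment of a Rademacher sum is controlled by
products of cosines, and AM-GM bounds these by powers `|cos| ^ s` with `s ≥ 2` as long as no
coefficient dominates. The integral of `|cos| ^ s` is compared with the Gaussian one because the
distribution functions of the two profiles cross only once. A dominant coefficient is removed by an
induction on a strengthened inequality, and exponents below the critical one are reached by
interpolating between `p` and `2`.
-/

section LogCos

open Real Set

lemma le_of_hasDerivAt_le {f g f' g' : ℝ → ℝ} {a b x : ℝ}
    (hf : ∀ y ∈ Ico a b, HasDerivAt f (f' y) y) (hg : ∀ y ∈ Ico a b, HasDerivAt g (g' y) y)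
    (hfg : ∀ y ∈ Ico a b, f' y ≤ g' y) (ha : f a ≤ g a) (hx : x ∈ Ico a b) : f x ≤ g x := by
  have hsub : Icc a x ⊆ Ico a b := Icc_subset_Ico_right hx.2
  have hsub' : Ico a x ⊆ Ico a b := Ico_subset_Icc_self.trans hsub
  exact image_le_of_deriv_right_le_deriv_boundary
    (fun y hy => (hf y (hsub hy)).continuousAt.continuousWithinAt)
    (fun y hy => (hf y (hsub' hy)).hasDerivWithinAt) ha
    (fun y hy => (hg y (hsub hy)).continuousAt.continuousWithinAt)
    (fun y hy => (hg y (hsub' hy)).hasDerivWithinAt)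
    (fun y hy => hfg y (hsub' hy)) (right_mem_Icc.2 hx.1)

lemma cos_le_taylor_four {x : ℝ} (hx : 0 ≤ x) : cos x ≤ 1 - x ^ 2 / 2 + x ^ 4 / 24 := by
  refine le_of_hasDerivAt_le (f' := fun y => -sin y) (g' := fun y => -(y - y ^ 3 / 6)) (b := x + 1)
    (g := fun y => 1 - y ^ 2 / 2 + y ^ 4 / 24) (fun y _ => hasDerivAt_cos y) (fun y _ => ?_)
    (fun y hy => neg_le_neg (sin_ge_sub_cube hy.1)) (by simp) ⟨hx, lt_add_one x⟩
  exact ((((hasDerivAt_pow 2 y).div_const 2).const_sub 1).add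
    ((hasDerivAt_pow 4 y).div_const 24)).congr_deriv (by norm_num; ring)

lemma sin_le_taylor_five {x : ℝ} (hx : 0 ≤ x) : sin x ≤ x - x ^ 3 / 6 + x ^ 5 / 120 := by
  refine le_of_hasDerivAt_le (f' := cos) (g' := fun y => 1 - y ^ 2 / 2 + y ^ 4 / 24) (b := x + 1)
    (g := fun y => y - y ^ 3 / 6 + y ^ 5 / 120) (fun y _ => hasDerivAt_sin y) (fun y _ => ?_)
    (fun y hy => cos_le_taylor_four hy.1) (by simp) ⟨hx, lt_add_one x⟩
  exact (((hasDerivAt_id y).sub ((hasDerivAt_pow 3 y).div_const 6)).add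
    ((hasDerivAt_pow 5 y).div_const 120)).congr_deriv (by norm_num; ring)

lemma taylor_six_le_cos {x : ℝ} (hx : 0 ≤ x) :
    1 - x ^ 2 / 2 + x ^ 4 / 24 - x ^ 6 / 720 ≤ cos x := by
  refine le_of_hasDerivAt_le (f' := fun y => -(y - y ^ 3 / 6 + y ^ 5 / 120)) (g' := fun y => -sin y)
    (f := fun y => 1 - y ^ 2 / 2 + y ^ 4 / 24 - y ^ 6 / 720) (b := x + 1) (fun y _ => ?_)
    (fun y _ => hasDerivAt_cos y) (fun y hy => neg_le_neg (sin_le_taylor_five hy.1)) (by simp)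
    ⟨hx, lt_add_one x⟩
  exact (((((hasDerivAt_pow 2 y).div_const 2).const_sub 1).add
    ((hasDerivAt_pow 4 y).div_const 24)).sub ((hasDerivAt_pow 6 y).div_const 720)).congr_deriv
    (by norm_num; ring)

/-- The Taylor polynomial of degree 13 of the tangent, a lower bound for it on `[0, π/2)`. -/
noncomputable def tanTaylor (x : ℝ) : ℝ :=
  x + x ^ 3 / 3 + 2 * x ^ 5 / 15 + 17 * x ^ 7 / 315 + 62 * x ^ 9 / 2835 + 1382 * x ^ 11 / 155925
    + 21844 * x ^ 13 / 6081075

lemma hasDerivAt_tanTaylor (x : ℝ) :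
    HasDerivAt tanTaylor (1 + x ^ 2 + 2 * x ^ 4 / 3 + 17 * x ^ 6 / 45 + 62 * x ^ 8 / 315
      + 1382 * x ^ 10 / 14175 + 21844 * x ^ 12 / 467775) x := by
  have h (n : ℕ) (a b : ℝ) := ((hasDerivAt_pow n x).const_mul a).div_const b
  exact (((((((hasDerivAt_id x).add ((hasDerivAt_pow 3 x).div_const 3)).add (h 5 2 15)).add
    (h 7 17 315)).add (h 9 62 2835)).add (h 11 1382 155925)).add
    (h 13 21844 6081075)).congr_deriv (by norm_num; ring)

lemma deriv_tanTaylor_le (x : ℝ) : deriv tanTaylor x ≤ 1 + tanTaylor x ^ 2 := by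
  rw [(hasDerivAt_tanTaylor x).deriv, ← sub_nonneg]
  unfold tanTaylor
  ring_nf
  positivity

lemma tanTaylor_le_tan {x : ℝ} (hx : x ∈ Ico 0 (π / 2)) : tanTaylor x ≤ tan x := by
  have h_arctan : arctan (tanTaylor x) ≤ x := by
    refine le_of_hasDerivAt_le (f := fun y => arctan (tanTaylor y)) (g := fun y => y)
      (f' := fun y => 1 / (1 + tanTaylor y ^ 2) * deriv tanTaylor y) (g' := fun _ => 1)
      (fun y _ => ?_) (fun y _ => hasDerivAt_id y) (fun y _ => ?_) (by simp [tanTaylor]) hx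
    · exact (hasDerivAt_arctan _).comp y (hasDerivAt_tanTaylor y).differentiableAt.hasDerivAt
    · rw [one_div, inv_mul_le_iff₀ (by positivity), mul_one]
      exact deriv_tanTaylor_le y
  calc tanTaylor x = tan (arctan (tanTaylor x)) := (tan_arctan _).symm
    _ ≤ tan x := strictMonoOn_tan.monotoneOn (arctan_mem_Ioo _)
      ⟨by linarith [hx.1, pi_pos], hx.2⟩ h_arctan

/-- `-log (cos x)`, the exponent of `cos x = exp (-negLogCos x)` for `|x| < π / 2`. -/
noncomputable def negLogCos (x : ℝ) : ℝ := -log (cos x)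

@[simp] lemma negLogCos_zero : negLogCos 0 = 0 := by simp [negLogCos]

lemma cos_pos_of_mem_Ico {x : ℝ} (hx : x ∈ Ico 0 (π / 2)) : 0 < cos x :=
  cos_pos_of_mem_Ioo ⟨by linarith [hx.1, pi_pos], hx.2⟩

lemma hasDerivAt_negLogCos {x : ℝ} (hx : cos x ≠ 0) : HasDerivAt negLogCos (tan x) x :=
  ((hasDerivAt_cos x).log hx).neg.congr_deriv (by rw [tan_eq_sin_div_cos]; ring)

/-- The ratio of `-log (cos x)` to its leading term `x ^ 2 / 2` at the origin. -/
noncomputable def logCosRatio (x : ℝ) : ℝ := 2 * negLogCos x / x ^ 2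

lemma two_mul_negLogCos {x : ℝ} (hx : x ≠ 0) : 2 * negLogCos x = x ^ 2 * logCosRatio x := by
  unfold logCosRatio
  field_simp

/-- The Taylor polynomial of `logCosRatio`, as a polynomial in `y = x ^ 2`; it comes from
integrating `tanTaylor`. -/
noncomputable def logCosRatioTaylor (y : ℝ) : ℝ :=
  1 + y / 6 + 2 * y ^ 2 / 45 + 17 * y ^ 3 / 1260 + 62 * y ^ 4 / 14175 + 1382 * y ^ 5 / 935550
    + 21844 * y ^ 6 / 42567525

lemma one_le_logCosRatioTaylor {y : ℝ} (hy : 0 ≤ y) : 1 ≤ logCosRatioTaylor y := by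
  rw [← sub_nonneg]
  unfold logCosRatioTaylor
  ring_nf
  positivity

lemma hasDerivAt_sq_mul_logCosRatioTaylor (x : ℝ) :
    HasDerivAt (fun y => y ^ 2 / 2 * logCosRatioTaylor (y ^ 2)) (tanTaylor x) x := by
  have h (n : ℕ) (b : ℝ) := (hasDerivAt_pow n x).mul_const b
  refine ((((((((h 2 (1 / 2)).add (h 4 (1 / 12))).add (h 6 (1 / 45))).add (h 8 (17 / 2520))).add
    (h 10 (31 / 14175))).add (h 12 (691 / 935550))).add (h 14 (10922 / 42567525))).congr_deriv
    ?_).congr_of_eventuallyEq (.of_forall fun y => ?_)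
  · simp only [tanTaylor]
    norm_num
    ring
  · simp only [logCosRatioTaylor, Pi.add_apply]
    ring

lemma logCosRatioTaylor_le {x : ℝ} (hx : x ∈ Ioo 0 (π / 2)) :
    logCosRatioTaylor (x ^ 2) ≤ logCosRatio x := by
  have h : x ^ 2 / 2 * logCosRatioTaylor (x ^ 2) ≤ negLogCos x :=
    le_of_hasDerivAt_le (b := π / 2) (fun y _ => hasDerivAt_sq_mul_logCosRatioTaylor y)
      (fun y hy => hasDerivAt_negLogCos (cos_pos_of_mem_Ico hy).ne')
      (fun y hy => tanTaylor_le_tan hy) (by simp) (Ioo_subset_Ico_self hx)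
  have hx2 : 0 < x ^ 2 := pow_pos hx.1 2
  rw [logCosRatio, le_div_iff₀ hx2]
  linarith

lemma one_le_logCosRatio {x : ℝ} (hx : x ∈ Ioo 0 (π / 2)) : 1 ≤ logCosRatio x :=
  (one_le_logCosRatioTaylor (sq_nonneg x)).trans (logCosRatioTaylor_le hx)

lemma sq_le_two_mul_negLogCos {x : ℝ} (hx : x ∈ Ioo 0 (π / 2)) : x ^ 2 ≤ 2 * negLogCos x := by
  rw [two_mul_negLogCos hx.1.ne']
  exact le_mul_of_one_le_right (sq_nonneg x) (one_le_logCosRatio hx)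

lemma logCosRatioTaylor_mul_ge {y : ℝ} (hy : 0 < y) (hy' : y ≤ 1.05 ^ 2) :
    1 - y / 6 + y ^ 2 / 120 ≤ logCosRatioTaylor y * (1.19 * logCosRatioTaylor y - 0.19)
      * (1 - y / 2 + y ^ 2 / 24 - y ^ 3 / 720) := by
  -- After substituting `y = 1.05 ^ 2 / (1 + z)` and clearing denominators, the difference of the
  -- two sides is a polynomial in `z` with nonnegative coefficients.
  obtain ⟨z, hz, rfl⟩ : ∃ z : ℝ, 0 ≤ z ∧ y = 441 / 400 / (1 + z) :=
    ⟨441 / 400 / y - 1, by rw [sub_nonneg, le_div_iff₀ hy]; linarith, by field_simp; ring⟩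
  rw [← sub_nonneg]
  have h_denom : 0 < (1 + z) ^ 15 := by positivity
  refine nonneg_of_mul_nonneg_right (a := (1 + z) ^ 15) ?_ h_denom
  unfold logCosRatioTaylor
  field_simp
  ring_nf
  positivity

lemma tan_le_mul_logCosRatio {x : ℝ} (hx : x ∈ Ioc 0 1.05) :
    tan x ≤ x * (logCosRatio x * (1.19 * logCosRatio x - 0.19)) := by
  have hx' : x ∈ Ioo 0 (π / 2) := ⟨hx.1, by linarith [hx.2, pi_gt_d2]⟩
  have hx0 := hx.1
  set T := logCosRatioTaylor (x ^ 2)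
  set K := logCosRatio x
  have hT : 1 ≤ T := one_le_logCosRatioTaylor (sq_nonneg x)
  have hTK : T ≤ K := logCosRatioTaylor_le hx'
  have hT0 : 0 ≤ T * (1.19 * T - 0.19) := mul_nonneg (by linarith) (by linarith)
  have hcos := cos_pos_of_mem_Ico (Ioo_subset_Ico_self hx')
  have hpoly := logCosRatioTaylor_mul_ge (pow_pos hx0 2) (pow_le_pow_left₀ hx0.le hx.2 2)
  rw [tan_eq_sin_div_cos, div_le_iff₀ hcos]
  calc sin x ≤ x * (1 - x ^ 2 / 6 + (x ^ 2) ^ 2 / 120) := by linarith [sin_le_taylor_five hx0.le]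
    _ ≤ x * (T * (1.19 * T - 0.19) * (1 - x ^ 2 / 2 + (x ^ 2) ^ 2 / 24 - (x ^ 2) ^ 3 / 720)) := by
      gcongr
    _ ≤ x * (T * (1.19 * T - 0.19) * cos x) := by
      gcongr
      linarith [taylor_six_le_cos hx0.le]
    _ ≤ x * (K * (1.19 * K - 0.19) * cos x) := by
      gcongr
      · linarith
      · linarith
    _ = x * (K * (1.19 * K - 0.19)) * cos x := by ring

lemma two_mul_negLogCos_le_mul_tan {x : ℝ} (hx : x ∈ Ico 0 (π / 2)) :
    2 * negLogCos x ≤ x * tan x := by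
  refine le_of_hasDerivAt_le (g := fun y => y * tan y) (f' := fun y => 2 * tan y)
    (g' := fun y => 1 * tan y + y * (1 / cos y ^ 2))
    (fun y hy => (hasDerivAt_negLogCos (cos_pos_of_mem_Ico hy).ne').const_mul 2)
    (fun y hy => (hasDerivAt_id y).mul (hasDerivAt_tan (cos_pos_of_mem_Ico hy).ne'))
    (fun y hy => ?_) (by simp) hx
  have hcos := cos_pos_of_mem_Ico hy
  have hsin : sin y * cos y ≤ y :=
    (mul_le_of_le_one_right (sin_nonneg_of_nonneg_of_le_pi hy.1 (by linarith [hy.2, pi_pos]))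
      (cos_le_one y)).trans (sin_le hy.1)
  have h_diff : 1 * tan y + y * (1 / cos y ^ 2) - 2 * tan y = (y - sin y * cos y) / cos y ^ 2 := by
    rw [tan_eq_sin_div_cos]
    field_simp
    ring
  exact sub_nonneg.1 (h_diff ▸ div_nonneg (sub_nonneg.2 hsin) (sq_nonneg _))

lemma hasDerivAt_logCosRatio {x : ℝ} (hx : x ∈ Ioo 0 (π / 2)) :
    HasDerivAt logCosRatio (2 * (tan x - x * logCosRatio x) / x ^ 2) x := by
  have hx0 := hx.1.ne'
  have h := ((hasDerivAt_negLogCos (cos_pos_of_mem_Ico (Ioo_subset_Ico_self hx)).ne').const_mul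
    2).div (hasDerivAt_pow 2 x) (pow_ne_zero 2 hx0)
  refine h.congr_deriv ?_
  rw [two_mul_negLogCos hx0]
  field_simp
  push_cast
  ring

lemma monotoneOn_logCosRatio : MonotoneOn logCosRatio (Ioo 0 (π / 2)) := by
  refine monotoneOn_of_hasDerivWithinAt_nonneg (convex_Ioo _ _)
    (fun x hx => (hasDerivAt_logCosRatio hx).continuousAt.continuousWithinAt)
    (fun x hx => (hasDerivAt_logCosRatio (interior_subset hx)).hasDerivWithinAt) (fun x hx => ?_)
  have hx := interior_subset hx
  have h := two_mul_negLogCos_le_mul_tan (Ioo_subset_Ico_self hx)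
  rw [two_mul_negLogCos hx.1.ne', sq, mul_assoc] at h
  have : x * logCosRatio x ≤ tan x := le_of_mul_le_mul_left h hx.1
  exact div_nonneg (by linarith) (sq_nonneg x)

lemma logCosRatio_le {x : ℝ} (hx : x ∈ Ioc 0 1.05) : logCosRatio x ≤ 1.27 := by
  have hpi := pi_gt_d2
  have h_cos : 0.995 / 2 ≤ cos 1.05 := by
    have := taylor_six_le_cos (x := 1.05) (by norm_num)
    norm_num at this ⊢
    linarith
  have h_log := log_le_log (by norm_num) h_cos
  rw [log_div (by norm_num) (by norm_num)] at h_log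
  have h_log' := one_sub_inv_le_log_of_pos (show (0 : ℝ) < 0.995 by norm_num)
  have h_end : logCosRatio 1.05 ≤ 1.27 := by
    rw [logCosRatio, div_le_iff₀ (by norm_num), negLogCos]
    norm_num at h_log h_log' ⊢
    linarith [log_two_lt_d9]
  exact (monotoneOn_logCosRatio ⟨hx.1, by linarith [hx.2]⟩ ⟨by norm_num, by linarith⟩ hx.2).trans
    h_end

lemma mul_log_le_half_sq_sub_one {K : ℝ} (hK : 1 ≤ K) : K * log K ≤ (K ^ 2 - 1) / 2 := by
  refine le_of_hasDerivAt_le (f := fun t => t * log t) (g := fun t => (t ^ 2 - 1) / 2)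
    (f' := fun t => log t + 1) (g' := fun t => t) (b := K + 1)
    (fun t ht => hasDerivAt_mul_log (by linarith [ht.1])) (fun t _ => ?_)
    (fun t ht => by linarith [log_le_sub_one_of_pos (show 0 < t by linarith [ht.1])]) (by simp)
    ⟨hK, lt_add_one K⟩
  exact (((hasDerivAt_pow 2 t).sub_const 1).div_const 2).congr_deriv (by norm_num)

lemma mul_sub_one_le_rpow_sub_one {K q : ℝ} (hK : K ∈ Icc 1 1.27) (hq : q ∈ Icc (3 / 4) 1) :
    q * (2.38 * (K - 1)) ≤ (2 * q + 1) * (K ^ q - 1) := by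
  obtain ⟨hK1, hK2⟩ := hK
  obtain ⟨hq1, hq2⟩ := hq
  have hK0 : 0 < K := by linarith
  have h_rpow : K - (1 - q) * ((K ^ 2 - 1) / 2) ≤ K ^ q := by
    calc K - (1 - q) * ((K ^ 2 - 1) / 2) ≤ K - (1 - q) * (K * log K) := by
          gcongr
          exact mul_log_le_half_sq_sub_one hK1
      _ = K * (log K * (q - 1) + 1) := by ring
      _ ≤ K * exp (log K * (q - 1)) := by
          gcongr
          exact add_one_le_exp _
      _ = K ^ q := by
          rw [← rpow_def_of_pos hK0, rpow_sub_one hK0.ne', mul_div_cancel₀ _ hK0.ne']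
  have h_factor : (2 * q + 1) * (K - (1 - q) * ((K ^ 2 - 1) / 2) - 1) - q * (2.38 * (K - 1))
      = (K - 1) * ((2 * q + 1) * (1 - (1 - q) * (K + 1) / 2) - 2.38 * q) := by ring
  have h_pos : 0 ≤ (2 * q + 1) * (1 - (1 - q) * (K + 1) / 2) - 2.38 * q := by
    have : (2 * q + 1) * (1 - (1 - q) * (1.27 + 1) / 2)
        ≤ (2 * q + 1) * (1 - (1 - q) * (K + 1) / 2) := by gcongr
    nlinarith
  calc q * (2.38 * (K - 1)) ≤ (2 * q + 1) * (K - (1 - q) * ((K ^ 2 - 1) / 2) - 1) := by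
        rw [← sub_nonneg, h_factor]
        exact mul_nonneg (by linarith) h_pos
    _ ≤ (2 * q + 1) * (K ^ q - 1) := by gcongr

lemma antitoneOn_rpow_mul_one_sub_logCosRatio_rpow {p : ℝ} (hp : p ∈ Icc (3 / 2) 2) :
    AntitoneOn (fun x => x ^ (-(p + 1)) * (1 - logCosRatio x ^ (-(p / 2)))) (Ioc 0 1.05) := by
  have hmem {x : ℝ} (hx : x ∈ Ioc 0 1.05) : x ∈ Ioo 0 (π / 2) :=
    ⟨hx.1, by linarith [hx.2, pi_gt_d2]⟩
  have hd {x : ℝ} (hx : x ∈ Ioc 0 1.05) :=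
    (hasDerivAt_rpow_const (p := -(p + 1)) (Or.inl hx.1.ne')).mul
      (((hasDerivAt_logCosRatio (hmem hx)).rpow_const (p := -(p / 2))
        (Or.inl (zero_lt_one.trans_le (one_le_logCosRatio (hmem hx))).ne')).const_sub 1)
  refine antitoneOn_of_hasDerivWithinAt_nonpos (convex_Ioc _ _)
    (fun x hx => (hd hx).continuousAt.continuousWithinAt)
    (fun x hx => (hd (interior_subset hx)).hasDerivWithinAt) (fun x hx => ?_)
  have hx := interior_subset hx
  have hx0 := hx.1
  have hK1 := one_le_logCosRatio (hmem hx)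
  have htan := tan_le_mul_logCosRatio hx
  have hKq := mul_sub_one_le_rpow_sub_one ⟨hK1, logCosRatio_le hx⟩ (q := p / 2)
    ⟨by linarith [hp.1], by linarith [hp.2]⟩
  set K := logCosRatio x
  have hK0 : 0 < K := by linarith
  have : 0 < K ^ (p / 2) := rpow_pos_of_pos hK0 _
  have htan' : tan x / (x * K) - 1 ≤ 1.19 * (K - 1) := by
    rw [sub_le_iff_le_add, div_le_iff₀ (by positivity)]
    linarith
  have h_factor : -(p + 1) * x ^ (-(p + 1) - 1) * (1 - K ^ (-(p / 2)))
      + x ^ (-(p + 1)) * -(2 * (tan x - x * K) / x ^ 2 * -(p / 2) * K ^ (-(p / 2) - 1))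
      = x ^ (-(p + 1)) / (x * K ^ (p / 2))
        * (p * (tan x / (x * K) - 1) - (p + 1) * (K ^ (p / 2) - 1)) := by
    rw [rpow_sub_one hx0.ne', rpow_sub_one hK0.ne', rpow_neg hK0.le (p / 2)]
    field_simp
    ring
  rw [h_factor]
  refine mul_nonpos_of_nonneg_of_nonpos (by positivity) ?_
  nlinarith [hp.1]

end LogCos

section NearPiDivTwo

open Real Set

lemma mul_neg_log_le {x a : ℝ} (hx : 0 < x) (ha : 0 < a) :
    x * -log x ≤ x * -log a + a - x := by
  have h_log := log_le_sub_one_of_pos (div_pos ha hx)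
  rw [log_div ha.ne' hx.ne'] at h_log
  calc x * -log x = x * -log a + x * (log a - log x) := by ring
    _ ≤ x * -log a + x * (a / x - 1) := by gcongr
    _ = x * -log a + a - x := by
      field_simp
      ring

lemma mul_negLogCos_pi_div_two_sub_le {x : ℝ} (hx : x ∈ Ioc 0 0.5209) :
    x * negLogCos (π / 2 - x) ≤ x * -log x + 0.175 * x ^ 3 := by
  obtain ⟨hx0, hx1⟩ := hx
  have hz : 0 < 1 - x ^ 2 / 6 := by nlinarith
  have h_log := log_le_log (mul_pos hx0 hz)
    (show x * (1 - x ^ 2 / 6) ≤ sin x by linarith [sin_gt_sub_cube hx0])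
  rw [log_mul hx0.ne' hz.ne'] at h_log
  have h_inv : (1 - x ^ 2 / 6)⁻¹ ≤ 1 + 1.05 * (x ^ 2 / 6) := by
    rw [inv_le_iff_one_le_mul₀ hz]
    nlinarith [mul_nonneg (sq_nonneg x) (show 0 ≤ 0.28 - x ^ 2 by nlinarith)]
  have h : negLogCos (π / 2 - x) ≤ -log x + 0.175 * x ^ 2 := by
    rw [negLogCos, cos_pi_div_two_sub]
    linarith [one_sub_inv_le_log_of_pos hz]
  calc x * negLogCos (π / 2 - x) ≤ x * (-log x + 0.175 * x ^ 2) := by gcongr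
    _ = x * -log x + 0.175 * x ^ 3 := by ring

lemma quartic_bound_of_le_quarter {x : ℝ} (hx : x ∈ Ioc 0 (1 / 4)) :
    4 * (0.25 + 0.3863 * x + 0.175 * x ^ 3) * (3.1416 + 0.03226 * (2.4672 - x ^ 2) ^ 2)
      ≤ (2.4672 - x ^ 2) ^ 2 := by
  obtain ⟨hx0, hx1⟩ := hx
  have h_sq : 5.78 ≤ (2.4672 - x ^ 2) ^ 2 := by
    have : x ^ 2 ≤ 1 / 16 := by nlinarith
    nlinarith
  have h_cubic : 0.25 + 0.3863 * x + 0.175 * x ^ 3 ≤ 0.35 := by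
    have : x ^ 3 ≤ (1 / 4) ^ 3 := by gcongr
    norm_num at this ⊢
    linarith
  have : 4 * (0.25 + 0.3863 * x + 0.175 * x ^ 3) * (3.1416 + 0.03226 * (2.4672 - x ^ 2) ^ 2)
      ≤ 4 * 0.35 * (3.1416 + 0.03226 * (2.4672 - x ^ 2) ^ 2) := by gcongr
  linarith

lemma quartic_bound_of_quarter_le {x : ℝ} (hx : x ∈ Icc (1 / 4) 0.5209) :
    4 * (0.5 - 0.30685 * x + 0.175 * x ^ 3) * (3.1416 + 0.03226 * (2.4672 - x ^ 2) ^ 2)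
      ≤ (2.4672 - x ^ 2) ^ 2 := by
  -- The substitution maps `z ∈ [0, ∞)` onto `x ∈ [0.25, 0.521)`; after clearing denominators the
  -- difference of the two sides is a polynomial in `z` with nonnegative coefficients.
  obtain ⟨z, hz, rfl⟩ : ∃ z : ℝ, 0 ≤ z ∧ x = (0.25 + 0.521 * z) / (1 + z) := by
    have hx' : 0 < 0.521 - x := by linarith [hx.2]
    refine ⟨(x - 0.25) / (0.521 - x), div_nonneg (by linarith [hx.1]) hx'.le, ?_⟩
    have h_denom : 1 + (x - 0.25) / (0.521 - x) = 0.271 / (0.521 - x) := by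
      field_simp
      ring
    rw [h_denom]
    field_simp
    ring
  rw [← sub_nonneg]
  have h_denom : 0 < (1 + z) ^ 7 := by positivity
  refine nonneg_of_mul_nonneg_right (a := (1 + z) ^ 7) ?_ h_denom
  field_simp
  ring_nf
  positivity

lemma four_mul_negLogCos_pi_div_two_sub_le {x : ℝ} (hx : x ∈ Ioc 0 0.5209) :
    4 * (x * negLogCos (π / 2 - x)) * (3.1416 + 0.03226 * (2.4672 - x ^ 2) ^ 2)
      ≤ (2.4672 - x ^ 2) ^ 2 := by
  have h := mul_negLogCos_pi_div_two_sub_le hx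
  have h_two := log_two_lt_d9
  have hx0 := hx.1
  have hx_log : x * log 2 ≤ x * 0.69315 := by
    gcongr
    linarith
  rcases le_total x (1 / 4) with hx' | hx'
  · refine le_trans ?_ (quartic_bound_of_le_quarter ⟨hx0, hx'⟩)
    have h_tangent := mul_neg_log_le hx0 (show (0 : ℝ) < (2 ^ 2)⁻¹ by norm_num)
    rw [log_inv, log_pow] at h_tangent
    gcongr
    push_cast at h_tangent
    linarith
  · refine le_trans ?_ (quartic_bound_of_quarter_le ⟨hx', hx.2⟩)
    have h_tangent := mul_neg_log_le hx0 (show (0 : ℝ) < 2⁻¹ by norm_num)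
    rw [log_inv] at h_tangent
    gcongr
    linarith

lemma inv_sq_sub_inv_sq_add_eq {a b : ℝ} (ha : 0 < a) (hb : 0 < b) :
    1 / a ^ 2 - 1 / b ^ 2 + (1 - 2 * a / (a + b)) / (a + b) ^ 2
      = (b - a) * ((a + b) / (a * b) ^ 2 + 1 / (a + b) ^ 3) := by
  field_simp
  ring

lemma inv_sq_sub_inv_sq_add_le {θ : ℝ} (hθ : θ ∈ Ico 1.05 (π / 2)) :
    1 / θ ^ 2 - 1 / (π - θ) ^ 2 + (1 - 2 * θ / π) / π ^ 2 ≤ 1 / (2 * negLogCos θ) := by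
  have hπ := pi_gt_d4
  have hπ' := pi_lt_d4
  obtain ⟨x, rfl⟩ : ∃ x, θ = π / 2 - x := ⟨π / 2 - θ, by ring⟩
  have hθ0 : π / 2 - x ∈ Ioo 0 (π / 2) := ⟨by linarith [hθ.1], hθ.2⟩
  have hx : 0 < x := by linarith [hθ.2]
  have hx1 : x ≤ 0.5209 := by linarith [hθ.1]
  have hc : 0 < 2 * negLogCos (π / 2 - x) :=
    (pow_pos hθ0.1 2).trans_le (sq_le_two_mul_negLogCos hθ0)
  have hB : 0 < 2.4672 - x ^ 2 := by nlinarith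
  have hA : 2.4672 - x ^ 2 ≤ (π / 2 - x) * (π - (π / 2 - x)) := by nlinarith
  have h_eq := inv_sq_sub_inv_sq_add_eq hθ0.1 (b := π - (π / 2 - x)) (by linarith)
  rw [add_sub_cancel, show π - (π / 2 - x) - (π / 2 - x) = 2 * x by ring] at h_eq
  have h_cube : 1 / π ^ 3 ≤ 0.03226 := by
    rw [div_le_iff₀ (by positivity)]
    have : 3.1415 ^ 3 ≤ π ^ 3 := by gcongr
    norm_num at this ⊢
    linarith
  rw [h_eq, le_div_iff₀ hc]
  calc 2 * x * (π / ((π / 2 - x) * (π - (π / 2 - x))) ^ 2 + 1 / π ^ 3)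
        * (2 * negLogCos (π / 2 - x))
      ≤ 2 * x * (3.1416 / (2.4672 - x ^ 2) ^ 2 + 0.03226) * (2 * negLogCos (π / 2 - x)) := by
        gcongr
    _ = 4 * (x * negLogCos (π / 2 - x)) * (3.1416 + 0.03226 * (2.4672 - x ^ 2) ^ 2)
        / (2.4672 - x ^ 2) ^ 2 := by
        field_simp
        ring
    _ ≤ 1 := by
        rw [div_le_one (by positivity)]
        exact four_mul_negLogCos_pi_div_two_sub_le ⟨hx, hx1⟩

end NearPiDivTwo

section InvPowMeasure

open Real Set
open scoped ENNReal

/-- The measure `u ^ (-p - 1) du` on `(0, ∞)`, under which `|x| ^ p` is the integral of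
`1 - cos (u * x)` up to a constant. -/
noncomputable def invPowMeasure (p : ℝ) : Measure ℝ :=
  (volume.restrict (Ioi 0)).withDensity fun u => ENNReal.ofReal (u ^ (-p - 1))

instance invPowMeasure.instNullSingletonClass (p : ℝ) : NullSingletonClass (invPowMeasure p) := by
  unfold invPowMeasure
  infer_instance

instance invPowMeasure.instSFinite (p : ℝ) : SFinite (invPowMeasure p) := by
  unfold invPowMeasure
  infer_instance

lemma invPowMeasure_apply (p : ℝ) {s : Set ℝ} (hs : MeasurableSet s) :
    invPowMeasure p s = ∫⁻ u in s ∩ Ioi 0, ENNReal.ofReal (u ^ (-p - 1)) := by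
  rw [invPowMeasure, withDensity_apply _ hs, Measure.restrict_restrict hs]

variable {p : ℝ}

lemma invPowMeasure_Ioi (hp : 0 < p) {a : ℝ} (ha : 0 < a) :
    invPowMeasure p (Ioi a) = ENNReal.ofReal (a ^ (-p) / p) := by
  rw [invPowMeasure_apply p measurableSet_Ioi, inter_eq_left.2 (Ioi_subset_Ioi ha.le),
    ← ofReal_integral_eq_lintegral_ofReal (integrableOn_Ioi_rpow_of_lt (by linarith) ha)]
  · rw [integral_Ioi_rpow_of_lt (by linarith) ha, sub_add_cancel, neg_div_neg_eq]
  · filter_upwards [ae_restrict_mem measurableSet_Ioi] with x hx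
    exact rpow_nonneg (ha.trans hx).le _

lemma invPowMeasure_Ioi_ne_top (hp : 0 < p) {a : ℝ} (ha : 0 < a) :
    invPowMeasure p (Ioi a) ≠ ∞ := by
  rw [invPowMeasure_Ioi hp ha]
  exact ENNReal.ofReal_ne_top

lemma invPowMeasure_real_Ioi (hp : 0 < p) {a : ℝ} (ha : 0 < a) :
    (invPowMeasure p).real (Ioi a) = a ^ (-p) / p := by
  rw [measureReal_def, invPowMeasure_Ioi hp ha, ENNReal.toReal_ofReal (by positivity)]

lemma invPowMeasure_Ioc (hp : 0 < p) {a b : ℝ} (ha : 0 < a) (hab : a ≤ b) :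
    invPowMeasure p (Ioc a b) = ENNReal.ofReal ((a ^ (-p) - b ^ (-p)) / p) := by
  have hb : 0 < b := ha.trans_le hab
  rw [← Ioi_sdiff_Ioi, measure_sdiff (Ioi_subset_Ioi hab) measurableSet_Ioi.nullMeasurableSet
    (invPowMeasure_Ioi_ne_top hp hb), invPowMeasure_Ioi hp hb, invPowMeasure_Ioi hp ha,
    ← ENNReal.ofReal_sub _ (by positivity), sub_div]

lemma convexOn_rpow_neg_sub_rpow_neg (hp : 0 < p) (m : ℝ) :
    ConvexOn ℝ (Ico 0 m) fun x => (m - x) ^ (-p) - (m + x) ^ (-p) := by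
  have h_sub (r : ℝ) {x : ℝ} (hx : x ∈ Ico 0 m) :
      HasDerivAt (fun x => (m - x) ^ r) (-1 * r * (m - x) ^ (r - 1)) x :=
    ((hasDerivAt_id x).const_sub m).rpow_const (Or.inl (sub_pos.2 hx.2).ne')
  have h_add (r : ℝ) {x : ℝ} (hx : x ∈ Ico 0 m) :
      HasDerivAt (fun x => (m + x) ^ r) (1 * r * (m + x) ^ (r - 1)) x :=
    ((hasDerivAt_id x).const_add m).rpow_const (Or.inl (by simp; linarith [hx.1, hx.2]))
  refine convexOn_of_hasDerivWithinAt2_nonneg (convex_Ico 0 m)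
    (fun x hx => ((h_sub _ hx).sub (h_add _ hx)).continuousAt.continuousWithinAt)
    (fun x hx => ((h_sub _ (interior_subset hx)).sub
      (h_add _ (interior_subset hx))).hasDerivWithinAt)
    (fun x hx => (((h_sub _ (interior_subset hx)).const_mul _).sub
      ((h_add _ (interior_subset hx)).const_mul _)).hasDerivWithinAt) (fun x hx => ?_)
  have hx := interior_subset hx
  have h_anti : (m + x) ^ (-p - 1 - 1) ≤ (m - x) ^ (-p - 1 - 1) :=
    rpow_le_rpow_of_nonpos (by linarith [hx.2]) (by linarith [hx.1]) (by linarith)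
  have h_factor : -1 * -p * (-1 * (-p - 1) * (m - x) ^ (-p - 1 - 1))
      - 1 * -p * (1 * (-p - 1) * (m + x) ^ (-p - 1 - 1))
      = p * (p + 1) * ((m - x) ^ (-p - 1 - 1) - (m + x) ^ (-p - 1 - 1)) := by ring
  rw [h_factor]
  exact mul_nonneg (by positivity) (by linarith)

lemma ofReal_mul_invPowMeasure_Ioc_le (hp : 0 < p) {m s t : ℝ} (hs : 0 < s) (hst : s ≤ t)
    (htm : t < m) :
    ENNReal.ofReal t * invPowMeasure p (Ioc (m - s) (m + s))
      ≤ ENNReal.ofReal s * invPowMeasure p (Ioc (m - t) (m + t)) := by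
  have ht : 0 < t := hs.trans_le hst
  have h_secant := (convexOn_rpow_neg_sub_rpow_neg hp m).secant_mono (a := 0)
    ⟨le_rfl, ht.trans htm⟩ ⟨hs.le, hst.trans_lt htm⟩ ⟨ht.le, htm⟩ hs.ne' ht.ne' hst
  simp only [sub_zero, add_zero, sub_self] at h_secant
  rw [div_le_div_iff₀ hs ht] at h_secant
  rw [invPowMeasure_Ioc hp (by linarith) (by linarith),
    invPowMeasure_Ioc hp (by linarith) (by linarith), ← ENNReal.ofReal_mul ht.le,
    ← ENNReal.ofReal_mul hs.le, ← mul_div_assoc, ← mul_div_assoc]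
  refine ENNReal.ofReal_le_ofReal (div_le_div_of_nonneg_right ?_ hp.le)
  linarith

variable {q T : ℝ} {A : Set ℝ}

lemma rpow_neg_sub_one_eq {u : ℝ} (hu : 0 < u) (p q : ℝ) :
    u ^ (-p - 1) = u ^ (q - p) * u ^ (-q - 1) := by
  rw [← rpow_add hu]
  ring_nf

lemma invPowMeasure_le_of_subset_Iic (hpq : p ≤ q) (hA : MeasurableSet A) (hAT : A ⊆ Iic T) :
    invPowMeasure p A ≤ ENNReal.ofReal (T ^ (q - p)) * invPowMeasure q A := by
  rw [invPowMeasure_apply p hA, invPowMeasure_apply q hA,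
    ← lintegral_const_mul' _ _ ENNReal.ofReal_ne_top]
  refine setLIntegral_mono' (hA.inter measurableSet_Ioi) fun u ⟨huA, hu⟩ => ?_
  have hu0 : 0 < u := hu
  have huT : u ≤ T := hAT huA
  have hT : 0 ≤ T := hu0.le.trans huT
  rw [← ENNReal.ofReal_mul (by positivity), rpow_neg_sub_one_eq hu0 p q]
  gcongr

lemma le_invPowMeasure_of_subset_Ici (hpq : p ≤ q) (hT : 0 ≤ T) (hA : MeasurableSet A)
    (hAT : A ⊆ Ici T) : ENNReal.ofReal (T ^ (q - p)) * invPowMeasure q A ≤ invPowMeasure p A := by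
  rw [invPowMeasure_apply p hA, invPowMeasure_apply q hA,
    ← lintegral_const_mul' _ _ ENNReal.ofReal_ne_top]
  refine setLIntegral_mono' (hA.inter measurableSet_Ioi) fun u ⟨huA, hu⟩ => ?_
  have hu0 : 0 < u := hu
  rw [← ENNReal.ofReal_mul (by positivity), rpow_neg_sub_one_eq hu0 p q]
  have huT : T ≤ u := hAT huA
  gcongr

-- The two measures differ by the density `u ^ (q - p)`, which is at most its value at `T` on
-- `A \ Ioi T` and at least that value on `Ioi T \ A`.
lemma invPowMeasure_le_Ioi_of_le (hq : 0 < q) (hpq : p ≤ q) (hT : 0 < T) (hA : MeasurableSet A)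
    (h : invPowMeasure q A ≤ invPowMeasure q (Ioi T)) :
    invPowMeasure p A ≤ invPowMeasure p (Ioi T) := by
  have h_diff : invPowMeasure q (A \ Ioi T) ≤ invPowMeasure q (Ioi T \ A) := by
    rw [← measure_inter_add_sdiff A (measurableSet_Ioi (a := T)),
      ← measure_inter_add_sdiff (Ioi T) hA, inter_comm] at h
    exact (ENNReal.add_le_add_iff_left (ne_top_of_le_ne_top (invPowMeasure_Ioi_ne_top hq hT)
      (measure_mono inter_subset_left))).1 h
  rw [← measure_inter_add_sdiff A (measurableSet_Ioi (a := T)),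
    ← measure_inter_add_sdiff (Ioi T) hA, inter_comm]
  gcongr _ + ?_
  calc invPowMeasure p (A \ Ioi T)
      ≤ ENNReal.ofReal (T ^ (q - p)) * invPowMeasure q (A \ Ioi T) :=
        invPowMeasure_le_of_subset_Iic hpq (hA.diff measurableSet_Ioi)
          fun _ hx => mem_Iic.2 (not_lt.1 hx.2)
    _ ≤ ENNReal.ofReal (T ^ (q - p)) * invPowMeasure q (Ioi T \ A) := by gcongr
    _ ≤ invPowMeasure p (Ioi T \ A) :=
        le_invPowMeasure_of_subset_Ici hpq hT.le (measurableSet_Ioi.diff hA)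
          fun _ hx => (mem_Ioi.1 hx.1).le

end InvPowMeasure

section CosSublevel

open Real Set
open scoped ENNReal

/-- The set of `u > 0` with `|cos u| < cos θ`; the distribution function of `|cos u|` is its
`invPowMeasure`. -/
def cosSublevel (θ : ℝ) : Set ℝ := {u | 0 < u ∧ |cos u| < cos θ}

lemma measurableSet_cosSublevel (θ : ℝ) : MeasurableSet (cosSublevel θ) :=
  measurableSet_Ioi.inter (measurableSet_lt (f := fun u => |cos u|) (g := fun _ => cos θ)
    (by fun_prop) measurable_const)

lemma exists_eq_add_nat_mul {u T : ℝ} (hu : 0 ≤ u) (hT : 0 < T) :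
    ∃ k : ℕ, ∃ r ∈ Ico 0 T, u = r + k * T := by
  refine ⟨⌊u / T⌋₊, u - ⌊u / T⌋₊ * T, ⟨?_, ?_⟩, by ring⟩
  · have := Nat.floor_le (div_nonneg hu hT.le)
    rw [le_div_iff₀ hT] at this
    linarith
  · have := Nat.lt_floor_add_one (u / T)
    rw [div_lt_iff₀ hT] at this
    linarith

variable {p θ : ℝ}

lemma abs_cos_add_nat_mul_pi_lt_iff (hθ : θ ∈ Ioo 0 (π / 2)) {r : ℝ} (hr : r ∈ Ico 0 π) (k : ℕ) :
    |cos (r + k * π)| < cos θ ↔ r ∈ Ioo θ (π - θ) := by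
  have hθ0 := hθ.1
  have hθ1 := hθ.2
  rw [cos_add_nat_mul_pi, abs_mul, abs_neg_one_pow, one_mul, abs_lt, ← cos_pi_sub θ,
    strictAntiOn_cos.lt_iff_gt ⟨by linarith, by linarith⟩ (Ico_subset_Icc_self hr),
    strictAntiOn_cos.lt_iff_gt (Ico_subset_Icc_self hr) ⟨by linarith, by linarith⟩]
  exact and_comm

lemma cosSublevel_eq_iUnion (hθ : θ ∈ Ioo 0 (π / 2)) :
    cosSublevel θ = ⋃ k : ℕ, Ioo (θ + k * π) (π - θ + k * π) := by
  ext u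
  simp only [cosSublevel, mem_ofPred_eq, mem_iUnion, mem_Ioo]
  constructor
  · rintro ⟨hu, hcos⟩
    obtain ⟨k, r, hr, rfl⟩ := exists_eq_add_nat_mul hu.le pi_pos
    rw [abs_cos_add_nat_mul_pi_lt_iff hθ hr] at hcos
    exact ⟨k, by linarith [hcos.1], by linarith [hcos.2]⟩
  · rintro ⟨k, h1, h2⟩
    have hk : 0 ≤ k * π := by positivity
    have hθ0 := hθ.1
    refine ⟨by linarith, ?_⟩
    rw [show u = (u - k * π) + k * π by ring,
      abs_cos_add_nat_mul_pi_lt_iff hθ ⟨by linarith, by linarith⟩]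
    exact ⟨by linarith, by linarith⟩

lemma cosSublevel_subset_Ioi (hθ : θ ∈ Ioo 0 (π / 2)) : cosSublevel θ ⊆ Ioi θ := by
  rw [cosSublevel_eq_iUnion hθ]
  refine iUnion_subset fun k u hu => ?_
  have hk : 0 ≤ k * π := by positivity
  exact mem_Ioi.2 (by linarith [hu.1])

lemma Ioi_sdiff_cosSublevel_eq_iUnion (hθ : θ ∈ Ioo 0 (π / 2)) :
    Ioi θ \ cosSublevel θ = ⋃ k : ℕ, Icc ((k + 1) * π - θ) ((k + 1) * π + θ) := by
  have hθ0 := hθ.1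
  have hθ1 := hθ.2
  ext u
  simp only [cosSublevel, mem_sdiff, mem_ofPred_eq, mem_iUnion, mem_Icc, mem_Ioi, not_and]
  constructor
  · rintro ⟨hu, hcos⟩
    obtain ⟨k, r, hr, rfl⟩ := exists_eq_add_nat_mul (hθ0.trans hu).le pi_pos
    have hcos := hcos (hθ0.trans hu)
    rw [abs_cos_add_nat_mul_pi_lt_iff hθ hr, mem_Ioo, not_and_or, not_lt, not_lt] at hcos
    rcases hcos with hrθ | hrθ
    · rcases k with _ | k
      · simp at hu
        linarith
      · refine ⟨k, ?_, ?_⟩ <;> push_cast <;> linarith [hr.1]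
    · exact ⟨k, by linarith, by linarith [hr.2]⟩
  · rintro ⟨k, h1, h2⟩
    have hk : 0 ≤ k * π := by positivity
    refine ⟨by linarith, fun _ hcos => ?_⟩
    rcases lt_or_ge u ((k + 1) * π) with hu | hu
    · rw [show u = (u - k * π) + k * π by ring,
        abs_cos_add_nat_mul_pi_lt_iff hθ ⟨by linarith, by linarith⟩] at hcos
      linarith [hcos.2]
    · rw [show u = (u - (k + 1) * π) + (k + 1 : ℕ) * π by push_cast; ring,
        abs_cos_add_nat_mul_pi_lt_iff hθ ⟨by linarith, by linarith⟩] at hcos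
      linarith [hcos.1]

lemma invPowMeasure_Ioi_sdiff_cosSublevel (p : ℝ) (hθ : θ ∈ Ioo 0 (π / 2)) :
    invPowMeasure p (Ioi θ \ cosSublevel θ)
      = ∑' k : ℕ, invPowMeasure p (Ioc ((k + 1) * π - θ) ((k + 1) * π + θ)) := by
  have h_disj : Pairwise (Function.onFun Disjoint
      fun k : ℕ => Icc ((k + 1) * π - θ) ((k + 1) * π + θ)) := by
    refine (pairwise_disjoint_on _).2 fun i j hij => Set.disjoint_left.2 ?_
    rintro x ⟨-, hxi⟩ ⟨hxj, -⟩
    have : (i : ℝ) + 1 ≤ j := by exact_mod_cast hij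
    nlinarith [hθ.2, pi_pos]
  rw [Ioi_sdiff_cosSublevel_eq_iUnion hθ, measure_iUnion h_disj fun k => measurableSet_Icc]
  exact tsum_congr fun k => (measure_congr Ioc_ae_eq_Icc).symm

lemma ofReal_mul_invPowMeasure_Ioi_sdiff_cosSublevel_le (hp : 0 < p) {θ₁ θ₂ : ℝ} (hθ₁ : 0 < θ₁)
    (hθ : θ₁ ≤ θ₂) (hθ₂ : θ₂ < π / 2) :
    ENNReal.ofReal θ₂ * invPowMeasure p (Ioi θ₁ \ cosSublevel θ₁)
      ≤ ENNReal.ofReal θ₁ * invPowMeasure p (Ioi θ₂ \ cosSublevel θ₂) := by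
  rw [invPowMeasure_Ioi_sdiff_cosSublevel p ⟨hθ₁, hθ.trans_lt hθ₂⟩,
    invPowMeasure_Ioi_sdiff_cosSublevel p ⟨hθ₁.trans_le hθ, hθ₂⟩, ← ENNReal.tsum_mul_left,
    ← ENNReal.tsum_mul_left]
  refine ENNReal.tsum_le_tsum fun k => ofReal_mul_invPowMeasure_Ioc_le hp hθ₁ hθ ?_
  have hk : 0 ≤ k * π := by positivity
  linarith

lemma tsum_invPowMeasure_Ioc_le (p : ℝ) :
    ∑' k : ℕ, invPowMeasure p (Ioc (π + k * π) (π + (k + 1 : ℕ) * π))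
      ≤ invPowMeasure p (Ioi π) := by
  have h_mono : Monotone fun k : ℕ => π + k * π := by
    intro i j hij
    dsimp only
    gcongr
  refine (tsum_meas_le_meas_iUnion_of_disjoint _ (fun k => measurableSet_Ioc)
    h_mono.pairwise_disjoint_on_Ioc_succ).trans
    (measure_mono (iUnion_subset fun k u hu => mem_Ioi.2 ?_))
  have hk : 0 ≤ k * π := by positivity
  linarith [hu.1]

lemma invPowMeasure_cosSublevel_le (hp : 0 < p) (hθ : θ ∈ Ioo 0 (π / 2)) :
    invPowMeasure p (cosSublevel θ) ≤ invPowMeasure p (Ioc θ (π - θ))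
      + ENNReal.ofReal (1 - 2 * θ / π) * invPowMeasure p (Ioi π) := by
  -- The `(k + 1)`-st gap is concentric with the period `(π + k * π, π + (k + 1) * π]` and fills
  -- the fraction `1 - 2 * θ / π` of it.
  have h_gap (k : ℕ) : invPowMeasure p (Ioo (θ + (k + 1 : ℕ) * π) (π - θ + (k + 1 : ℕ) * π))
      ≤ ENNReal.ofReal (1 - 2 * θ / π)
        * invPowMeasure p (Ioc (π + k * π) (π + (k + 1 : ℕ) * π)) := by
    have hk : 0 ≤ k * π := by positivity
    have hπ := pi_pos
    have h := ofReal_mul_invPowMeasure_Ioc_le hp (m := (k + 3 / 2) * π) (s := π / 2 - θ)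
      (t := π / 2) (by linarith [hθ.2]) (by linarith [hθ.1]) (by linarith)
    rw [show (k + 3 / 2) * π - (π / 2 - θ) = θ + (k + 1 : ℕ) * π by push_cast; ring,
      show (k + 3 / 2) * π + (π / 2 - θ) = π - θ + (k + 1 : ℕ) * π by push_cast; ring,
      show (k + 3 / 2) * π - π / 2 = π + k * π by ring,
      show (k + 3 / 2) * π + π / 2 = π + (k + 1 : ℕ) * π by push_cast; ring,
      show π / 2 - θ = π / 2 * (1 - 2 * θ / π) by field_simp, ENNReal.ofReal_mul (by positivity),
      mul_assoc] at h
    rw [measure_congr Ioo_ae_eq_Ioc]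
    exact (ENNReal.mul_le_mul_iff_right (ENNReal.ofReal_pos.2 (by positivity)).ne'
      ENNReal.ofReal_ne_top).1 h
  calc invPowMeasure p (cosSublevel θ)
      ≤ ∑' k : ℕ, invPowMeasure p (Ioo (θ + k * π) (π - θ + k * π)) := by
        rw [cosSublevel_eq_iUnion hθ]
        exact measure_iUnion_le _
    _ = invPowMeasure p (Ioc θ (π - θ))
        + ∑' k : ℕ, invPowMeasure p (Ioo (θ + (k + 1 : ℕ) * π) (π - θ + (k + 1 : ℕ) * π)) := by
        rw [tsum_eq_zero_add' ENNReal.summable]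
        simp [measure_congr Ioo_ae_eq_Ioc]
    _ ≤ invPowMeasure p (Ioc θ (π - θ)) + ∑' k : ℕ, ENNReal.ofReal (1 - 2 * θ / π)
          * invPowMeasure p (Ioc (π + k * π) (π + (k + 1 : ℕ) * π)) := by
        gcongr with k
        exact h_gap k
    _ ≤ invPowMeasure p (Ioc θ (π - θ))
        + ENNReal.ofReal (1 - 2 * θ / π) * invPowMeasure p (Ioi π) := by
        rw [ENNReal.tsum_mul_left]
        gcongr
        exact tsum_invPowMeasure_Ioc_le p

/-- The point at which the Gaussian `exp (-u ^ 2 / 2)` takes the value `cos θ`. -/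
noncomputable def gaussThreshold (θ : ℝ) : ℝ := √(2 * negLogCos θ)

lemma gaussThreshold_eq (hθ : 0 < θ) : gaussThreshold θ = θ * √(logCosRatio θ) := by
  rw [gaussThreshold, two_mul_negLogCos hθ.ne', sqrt_mul (sq_nonneg θ), sqrt_sq hθ.le]

lemma gaussThreshold_pos (hθ : θ ∈ Ioo 0 (π / 2)) : 0 < gaussThreshold θ :=
  sqrt_pos.2 ((pow_pos hθ.1 2).trans_le (sq_le_two_mul_negLogCos hθ))

lemma invPowMeasure_two_cosSublevel_le (hθ : θ ∈ Ico 1.05 (π / 2)) :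
    invPowMeasure 2 (cosSublevel θ) ≤ invPowMeasure 2 (Ioi (gaussThreshold θ)) := by
  have hθ0 : 0 < θ := by linarith [hθ.1]
  have hθπ : 0 < π - θ := by linarith [hθ.2, pi_pos]
  have h_frac : 0 ≤ 1 - 2 * θ / π := by
    rw [sub_nonneg, div_le_one pi_pos]
    linarith [hθ.2]
  have h_inv {x : ℝ} (hx : 0 < x) : x ^ (-2 : ℝ) = 1 / x ^ 2 := by
    rw [rpow_neg hx.le, rpow_two, one_div]
  have h_first : 0 ≤ 1 / θ ^ 2 - 1 / (π - θ) ^ 2 := by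
    rw [sub_nonneg]
    gcongr
    linarith [hθ.2]
  have hT : gaussThreshold θ ^ 2 = 2 * negLogCos θ := sq_sqrt <|
    (sq_nonneg θ).trans (sq_le_two_mul_negLogCos ⟨hθ0, hθ.2⟩)
  refine (invPowMeasure_cosSublevel_le two_pos ⟨hθ0, hθ.2⟩).trans ?_
  rw [invPowMeasure_Ioc two_pos hθ0 (by linarith [hθ.2]), invPowMeasure_Ioi two_pos pi_pos,
    invPowMeasure_Ioi two_pos (gaussThreshold_pos ⟨hθ0, hθ.2⟩), ← ENNReal.ofReal_mul h_frac,
    ← ENNReal.ofReal_add (by rw [h_inv hθ0, h_inv hθπ]; positivity) (by positivity), h_inv hθ0,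
    h_inv hθπ, h_inv pi_pos, h_inv (gaussThreshold_pos ⟨hθ0, hθ.2⟩), hT]
  refine ENNReal.ofReal_le_ofReal ?_
  rw [mul_div_assoc', mul_one_div]
  linarith [inv_sq_sub_inv_sq_add_le hθ]

lemma invPowMeasure_cosSublevel_le_of_large (hp : p ≤ 2) (hθ : θ ∈ Ico 1.05 (π / 2)) :
    invPowMeasure p (cosSublevel θ) ≤ invPowMeasure p (Ioi (gaussThreshold θ)) :=
  invPowMeasure_le_Ioi_of_le two_pos hp (gaussThreshold_pos ⟨by linarith [hθ.1], hθ.2⟩)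
    (measurableSet_cosSublevel θ) (invPowMeasure_two_cosSublevel_le hθ)

lemma invPowMeasure_real_Ioi_sub_gaussThreshold (hp : 0 < p) (hθ : θ ∈ Ioo 0 (π / 2)) :
    (invPowMeasure p).real (Ioi θ) - (invPowMeasure p).real (Ioi (gaussThreshold θ))
      = θ * (θ ^ (-(p + 1)) * (1 - logCosRatio θ ^ (-(p / 2)))) / p := by
  have hθ0 := hθ.1
  rw [invPowMeasure_real_Ioi hp hθ0, invPowMeasure_real_Ioi hp (gaussThreshold_pos hθ),
    gaussThreshold_eq hθ0, mul_rpow hθ0.le (sqrt_nonneg _), sqrt_eq_rpow,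
    ← rpow_mul (by linarith [one_le_logCosRatio hθ]), show -(p + 1) = -p - 1 by ring,
    rpow_sub_one hθ0.ne', show 1 / 2 * -p = -(p / 2) by ring]
  field_simp

lemma invPowMeasure_real_Ioi_eq_add (hp : 0 < p) (hθ : θ ∈ Ioo 0 (π / 2)) :
    (invPowMeasure p).real (Ioi θ) = (invPowMeasure p).real (cosSublevel θ)
      + (invPowMeasure p).real (Ioi θ \ cosSublevel θ) := by
  rw [← measureReal_inter_add_sdiff (measurableSet_cosSublevel θ)
    (invPowMeasure_Ioi_ne_top hp hθ.1), inter_eq_right.2 (cosSublevel_subset_Ioi hθ)]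

lemma invPowMeasure_cosSublevel_ne_top (hp : 0 < p) (hθ : θ ∈ Ioo 0 (π / 2)) :
    invPowMeasure p (cosSublevel θ) ≠ ∞ :=
  ne_top_of_le_ne_top (invPowMeasure_Ioi_ne_top hp hθ.1) (measure_mono (cosSublevel_subset_Ioi hθ))

-- Beyond `1.05` the comparison never fails. Below `1.05`, the measure of `Ioi θ \ cosSublevel θ`
-- divided by `θ` increases with `θ`, while the gap between `Ioi θ` and `Ioi (gaussThreshold θ)`
-- divided by `θ` decreases.
lemma invPowMeasure_gaussThreshold_le_of_lt (hp : p ∈ Icc (3 / 2) 2) {θ₁ θ₂ : ℝ} (hθ₁ : 0 < θ₁)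
    (hθ : θ₁ < θ₂) (hθ₂ : θ₂ < π / 2)
    (h : invPowMeasure p (Ioi (gaussThreshold θ₂)) < invPowMeasure p (cosSublevel θ₂)) :
    invPowMeasure p (Ioi (gaussThreshold θ₁)) ≤ invPowMeasure p (cosSublevel θ₁) := by
  have hp0 : 0 < p := by linarith [hp.1]
  have hmem₁ : θ₁ ∈ Ioo 0 (π / 2) := ⟨hθ₁, hθ.trans hθ₂⟩
  have hmem₂ : θ₂ ∈ Ioo 0 (π / 2) := ⟨hθ₁.trans hθ, hθ₂⟩
  have h_small : θ₂ < 1.05 := by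
    by_contra! h_large
    exact h.not_ge (invPowMeasure_cosSublevel_le_of_large hp.2 ⟨h_large, hθ₂⟩)
  have hT₁ := invPowMeasure_Ioi_ne_top hp0 (gaussThreshold_pos hmem₁)
  have hT₂ := invPowMeasure_Ioi_ne_top hp0 (gaussThreshold_pos hmem₂)
  have hA₁ := invPowMeasure_cosSublevel_ne_top hp0 hmem₁
  have hA₂ := invPowMeasure_cosSublevel_ne_top hp0 hmem₂
  have hB₂ : invPowMeasure p (Ioi θ₂ \ cosSublevel θ₂) ≠ ∞ :=
    ne_top_of_le_ne_top (invPowMeasure_Ioi_ne_top hp0 hmem₂.1) (measure_mono sdiff_subset)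
  have hB := ENNReal.toReal_mono (ENNReal.mul_ne_top ENNReal.ofReal_ne_top hB₂)
    (ofReal_mul_invPowMeasure_Ioi_sdiff_cosSublevel_le hp0 hθ₁ hθ.le hθ₂)
  simp only [ENNReal.toReal_mul, ENNReal.toReal_ofReal hmem₁.1.le, ENNReal.toReal_ofReal hmem₂.1.le,
    ← measureReal_def] at hB
  rw [← ENNReal.toReal_lt_toReal hT₂ hA₂, ← measureReal_def, ← measureReal_def] at h
  rw [← ENNReal.toReal_le_toReal hT₁ hA₁, ← measureReal_def, ← measureReal_def]
  have hA_add₁ := invPowMeasure_real_Ioi_eq_add hp0 hmem₁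
  have hA_add₂ := invPowMeasure_real_Ioi_eq_add hp0 hmem₂
  have h_gap : θ₁ * ((invPowMeasure p).real (Ioi θ₂)
        - (invPowMeasure p).real (Ioi (gaussThreshold θ₂)))
      ≤ θ₂ * ((invPowMeasure p).real (Ioi θ₁)
        - (invPowMeasure p).real (Ioi (gaussThreshold θ₁))) := by
    rw [invPowMeasure_real_Ioi_sub_gaussThreshold hp0 hmem₁,
      invPowMeasure_real_Ioi_sub_gaussThreshold hp0 hmem₂, ← mul_div_assoc, ← mul_div_assoc,
      mul_left_comm θ₁]
    have := antitoneOn_rpow_mul_one_sub_logCosRatio_rpow hp ⟨hθ₁, (hθ.trans h_small).le⟩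
      ⟨hmem₂.1, h_small.le⟩ hθ.le
    have hθ₂0 := hmem₂.1
    gcongr
  have hB_le : θ₂ * (invPowMeasure p).real (Ioi θ₁ \ cosSublevel θ₁)
      ≤ θ₂ * ((invPowMeasure p).real (Ioi θ₁)
        - (invPowMeasure p).real (Ioi (gaussThreshold θ₁))) :=
    (hB.trans (mul_le_mul_of_nonneg_left (by linarith) hθ₁.le)).trans h_gap
  linarith [le_of_mul_le_mul_left hB_le hmem₂.1]

end CosSublevel

section SingleCrossing

open Real Set
open scoped ENNReal

lemma ennreal_mul_add_mul_le {c d x y : ℝ≥0∞} (hcd : c ≤ d) (hxy : x ≤ y) :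
    d * x + c * y ≤ d * y + c * x := by
  obtain ⟨d, rfl⟩ := exists_add_of_le hcd
  obtain ⟨y, rfl⟩ := exists_add_of_le hxy
  exact le_of_le_of_eq le_self_add (show _ + d * y = _ by ring)

lemma lintegral_mul_le_of_singleCrossing {m : Measure ℝ} {I : Set ℝ} (hI : MeasurableSet I)
    {a b w : ℝ → ℝ≥0∞} (ha : Measurable a) (hb : Measurable b) (hw : Measurable w)
    (hw_mono : MonotoneOn w I) {M : ℝ≥0∞} (hM : M ≠ ∞) (hwM : ∀ t ∈ I, w t ≤ M)
    (h_cross : ∀ t₁ ∈ I, ∀ t₂ ∈ I, t₁ < t₂ → b t₁ < a t₁ → b t₂ ≤ a t₂)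
    (h_le : ∫⁻ t in I, b t ∂m ≤ ∫⁻ t in I, a t ∂m) (h_fin : ∫⁻ t in I, a t ∂m ≠ ∞) :
    ∫⁻ t in I, w t * b t ∂m ≤ ∫⁻ t in I, w t * a t ∂m := by
  -- `c` is the value of the weight at the crossing, so that `(w - c) * (a - b) ≥ 0` throughout.
  set c : ℝ≥0∞ := M ⊓ ⨅ t ∈ I ∩ {t | b t < a t}, w t
  have hc_top : c ≠ ∞ := ne_top_of_le_ne_top hM inf_le_left
  have h_pointwise (t : ℝ) (ht : t ∈ I) : w t * b t + c * a t ≤ w t * a t + c * b t := by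
    rcases lt_trichotomy (b t) (a t) with hlt | heq | hgt
    · exact ennreal_mul_add_mul_le (inf_le_right.trans (iInf₂_le t ⟨ht, hlt⟩)) hlt.le
    · rw [heq]
    · rw [add_comm, add_comm (w t * a t)]
      refine ennreal_mul_add_mul_le (le_inf (hwM t ht) (le_iInf₂ fun t' ht' => ?_)) hgt.le
      refine hw_mono ht ht'.1 (le_of_not_gt fun htt' => ?_)
      exact hgt.not_ge (h_cross t' ht'.1 t ht htt' ht'.2)
  have h_int := setLIntegral_mono' (μ := m) hI h_pointwise
  rw [lintegral_add_left (by fun_prop), lintegral_add_left (by fun_prop),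
    lintegral_const_mul _ (by fun_prop), lintegral_const_mul _ (by fun_prop)] at h_int
  refine (ENNReal.add_le_add_iff_right (ENNReal.mul_ne_top hc_top h_fin)).1 (h_int.trans ?_)
  gcongr

variable {α : Type*} [MeasurableSpace α] {ν : Measure α} [SFinite ν] {f g : α → ℝ}

lemma ofReal_one_sub_rpow_eq_setLIntegral {x s : ℝ} (hx : x ∈ Icc 0 1) (hs : 1 ≤ s) :
    ENNReal.ofReal (1 - x ^ s) = ∫⁻ t in Ioc x 1, ENNReal.ofReal (s * t ^ (s - 1)) := by
  have h_deriv (t : ℝ) : HasDerivAt (fun t : ℝ => t ^ s) (s * t ^ (s - 1)) t :=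
    hasDerivAt_rpow_const (Or.inr hs)
  have h_int : IntervalIntegrable (fun t => s * t ^ (s - 1)) volume x 1 :=
    ((continuous_id.rpow_const fun _ => Or.inr (by linarith)).const_mul s).intervalIntegrable _ _
  rw [← ofReal_integral_eq_lintegral_ofReal
    ((intervalIntegrable_iff_integrableOn_Ioc_of_le hx.2).1 h_int),
    ← intervalIntegral.integral_of_le hx.2,
    intervalIntegral.integral_eq_sub_of_hasDerivAt (fun t _ => h_deriv t) h_int, one_rpow]
  filter_upwards [ae_restrict_mem measurableSet_Ioc] with t ht
  have : 0 ≤ t := hx.1.trans ht.1.le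
  positivity

lemma lintegral_one_sub_rpow (hf : Measurable f) (hf01 : ∀ u, f u ∈ Icc 0 1) {s : ℝ} (hs : 1 ≤ s) :
    ∫⁻ u, ENNReal.ofReal (1 - f u ^ s) ∂ν
      = ∫⁻ t in Ioo (0 : ℝ) 1, ν {u | f u < t} * ENNReal.ofReal (s * t ^ (s - 1)) := by
  set k : ℝ → ℝ≥0∞ := fun t => ENNReal.ofReal (s * t ^ (s - 1))
  have hk : Measurable k := by fun_prop
  have hmeas : Measurable fun z : α × ℝ => {z : α × ℝ | f z.1 < z.2}.indicator (k ∘ Prod.snd) z :=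
    (hk.comp measurable_snd).indicator
      (measurableSet_lt (hf.comp measurable_fst) measurable_snd)
  calc ∫⁻ u, ENNReal.ofReal (1 - f u ^ s) ∂ν
      = ∫⁻ u, (∫⁻ t in Ioo (0 : ℝ) 1,
          {z : α × ℝ | f z.1 < z.2}.indicator (k ∘ Prod.snd) (u, t)) ∂ν := by
        refine lintegral_congr fun u => ?_
        rw [ofReal_one_sub_rpow_eq_setLIntegral (hf01 u) hs, setLIntegral_congr Ioo_ae_eq_Ioc.symm]
        have h_inter : Ioo (f u) 1 = Ioi (f u) ∩ Ioo 0 1 := by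
          ext t
          simp only [mem_Ioo, mem_inter_iff, mem_Ioi, and_congr_right_iff]
          exact fun ht => (and_iff_right ((hf01 u).1.trans_lt ht)).symm
        rw [h_inter, ← setLIntegral_indicator measurableSet_Ioi]
        rfl
    _ = ∫⁻ t in Ioo (0 : ℝ) 1, ∫⁻ u, {z : α × ℝ | f z.1 < z.2}.indicator (k ∘ Prod.snd) (u, t) ∂ν :=
        lintegral_lintegral_swap hmeas.aemeasurable
    _ = ∫⁻ t in Ioo (0 : ℝ) 1, ν {u | f u < t} * k t := by
        refine lintegral_congr fun t => ?_
        rw [mul_comm, ← lintegral_indicator_const (measurableSet_lt hf measurable_const)]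
        rfl

lemma measurable_measure_lt (ν : Measure α) (f : α → ℝ) : Measurable fun t => ν {u | f u < t} :=
  Monotone.measurable fun _ _ hst => measure_mono fun _ hu => lt_of_lt_of_le hu hst

/-- Nazarov and Podkorytov's distribution function lemma. -/
lemma lintegral_one_sub_rpow_le_of_singleCrossing (hf : Measurable f) (hg : Measurable g)
    (hf01 : ∀ u, f u ∈ Icc 0 1) (hg01 : ∀ u, g u ∈ Icc 0 1)
    (h_cross : ∀ t₁ ∈ Ioo (0 : ℝ) 1, ∀ t₂ ∈ Ioo (0 : ℝ) 1, t₁ < t₂ →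
      ν {u | g u < t₁} < ν {u | f u < t₁} → ν {u | g u < t₂} ≤ ν {u | f u < t₂})
    {r s : ℝ} (hr : 1 ≤ r) (hrs : r ≤ s)
    (h_le : ∫⁻ u, ENNReal.ofReal (1 - g u ^ r) ∂ν ≤ ∫⁻ u, ENNReal.ofReal (1 - f u ^ r) ∂ν)
    (h_fin : ∫⁻ u, ENNReal.ofReal (1 - f u ^ r) ∂ν ≠ ∞) :
    ∫⁻ u, ENNReal.ofReal (1 - g u ^ s) ∂ν ≤ ∫⁻ u, ENNReal.ofReal (1 - f u ^ s) ∂ν := by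
  have h_ratio : 0 ≤ s / r := div_nonneg (by linarith) (by linarith)
  have h_weight (h : α → ℝ) :
      ∫⁻ t in Ioo (0 : ℝ) 1, ν {u | h u < t} * ENNReal.ofReal (s * t ^ (s - 1))
        = ∫⁻ t in Ioo (0 : ℝ) 1, ENNReal.ofReal (s / r * t ^ (s - r))
          * (ν {u | h u < t} * ENNReal.ofReal (r * t ^ (r - 1))) := by
    refine setLIntegral_congr_fun measurableSet_Ioo fun t ht => ?_
    have ht0 := ht.1
    rw [mul_left_comm, ← ENNReal.ofReal_mul (mul_nonneg h_ratio (rpow_nonneg ht0.le _)),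
      mul_mul_mul_comm, div_mul_cancel₀ s (by positivity), ← rpow_add ht0,
      show s - r + (r - 1) = s - 1 by ring]
  rw [lintegral_one_sub_rpow hf hf01 hr] at h_le h_fin
  rw [lintegral_one_sub_rpow hg hg01 hr] at h_le
  rw [lintegral_one_sub_rpow hf hf01 (hr.trans hrs), lintegral_one_sub_rpow hg hg01 (hr.trans hrs),
    h_weight f, h_weight g]
  have h_meas (h : α → ℝ) :
      Measurable fun t => ν {u | h u < t} * ENNReal.ofReal (r * t ^ (r - 1)) :=
    (measurable_measure_lt ν h).mul (by fun_prop)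
  refine lintegral_mul_le_of_singleCrossing measurableSet_Ioo (h_meas f) (h_meas g)
    (by fun_prop) (fun t₁ h₁ t₂ _ h => ?_) (M := ENNReal.ofReal (s / r)) ENNReal.ofReal_ne_top
    (fun t ht => ?_) (fun t₁ h₁ t₂ h₂ h h_lt => ?_) h_le h_fin
  · have := h₁.1.le
    gcongr
  · refine ENNReal.ofReal_le_ofReal (mul_le_of_le_one_right h_ratio ?_)
    exact rpow_le_one ht.1.le ht.2.le (by linarith)
  · exact mul_le_mul_left (h_cross t₁ h₁ t₂ h₂ h (lt_of_mul_lt_mul_right' h_lt)) _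

end SingleCrossing

section OneSubCos

open Real Set ProbabilityTheory
open scoped ENNReal

variable {p : ℝ}

lemma lintegral_invPowMeasure (p : ℝ) {h : ℝ → ℝ≥0∞} (hh : Measurable h) :
    ∫⁻ u, h u ∂(invPowMeasure p) = ∫⁻ u in Ioi 0, ENNReal.ofReal (u ^ (-p - 1)) * h u :=
  lintegral_withDensity_eq_lintegral_mul _ (by fun_prop) hh

lemma lintegral_comp_mul_left_invPowMeasure (p : ℝ) {a : ℝ} (ha : 0 < a) {h : ℝ → ℝ≥0∞}
    (hh : Measurable h) :
    ∫⁻ u, h (a * u) ∂(invPowMeasure p)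
      = ENNReal.ofReal (a ^ p) * ∫⁻ u, h u ∂(invPowMeasure p) := by
  have h_image : (fun u => a * u) '' Ioi 0 = Ioi 0 := by
    rw [image_mul_left_Ioi ha, mul_zero]
  have h_subst := lintegral_image_eq_lintegral_abs_deriv_mul (s := Ioi 0)
    (f := fun u => a * u) measurableSet_Ioi
    (fun x _ => (hasDerivAt_const_mul a).hasDerivWithinAt) (mul_right_injective₀ ha.ne').injOn
    (fun x => ENNReal.ofReal (x ^ (-p - 1)) * h x)
  rw [h_image] at h_subst
  rw [lintegral_invPowMeasure p (by fun_prop), lintegral_invPowMeasure p hh, h_subst,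
    ← lintegral_const_mul _ (by fun_prop)]
  refine setLIntegral_congr_fun measurableSet_Ioi fun u hu => ?_
  have h_pow : a ^ p * a * a ^ (-p - 1) = 1 := by
    rw [← rpow_add_one ha.ne', ← rpow_add ha, show p + 1 + (-p - 1) = 0 by ring, rpow_zero]
  rw [← mul_assoc, ← mul_assoc, ← ENNReal.ofReal_mul (by positivity),
    ← ENNReal.ofReal_mul (by positivity), mul_rpow ha.le (mem_Ioi.1 hu).le, abs_of_pos ha,
    ← mul_assoc, h_pow, one_mul]

/-- The constant `∫₀^∞ (1 - cos u) u ^ (-p - 1) du` in the integral representation of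
`|x| ^ p`. -/
noncomputable def oneSubCosIntegral (p : ℝ) : ℝ≥0∞ :=
  ∫⁻ u, ENNReal.ofReal (1 - cos u) ∂(invPowMeasure p)

lemma oneSubCosIntegral_ne_top (hp : p ∈ Ioo 0 2) : oneSubCosIntegral p ≠ ∞ := by
  have h_near :
      ∫⁻ u in Ioc 0 1, ENNReal.ofReal (u ^ (-p - 1)) * ENNReal.ofReal (1 - cos u) ≠ ∞ := by
    have h_int := intervalIntegral.intervalIntegrable_rpow' (a := 0) (b := 1) (r := 1 - p)
      (by linarith [hp.2])
    rw [intervalIntegrable_iff_integrableOn_Ioc_of_le zero_le_one] at h_int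
    refine ne_top_of_le_ne_top h_int.lintegral_lt_top.ne
      (setLIntegral_mono' measurableSet_Ioc fun u hu => ?_)
    have hu0 := hu.1
    rw [← ENNReal.ofReal_mul (by positivity), show 1 - p = -p - 1 + 2 by ring, rpow_add hu0,
      rpow_two]
    gcongr
    nlinarith [one_sub_sq_div_two_le_cos (x := u)]
  have h_far : ∫⁻ u in Ioi 1, ENNReal.ofReal (u ^ (-p - 1)) * ENNReal.ofReal (1 - cos u) ≠ ∞ := by
    have h_int := integrableOn_Ioi_rpow_of_lt (show -p - 1 < -1 by linarith [hp.1]) one_pos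
    refine ne_top_of_le_ne_top (h_int.mul_const 2).lintegral_lt_top.ne
      (setLIntegral_mono' measurableSet_Ioi fun u hu => ?_)
    have hu0 : 0 < u := one_pos.trans hu
    rw [← ENNReal.ofReal_mul (by positivity)]
    gcongr
    linarith [neg_one_le_cos u]
  rw [oneSubCosIntegral, lintegral_invPowMeasure p (by fun_prop),
    ← Ioc_union_Ioi_eq_Ioi zero_le_one,
    lintegral_union measurableSet_Ioi (Ioc_disjoint_Ioi le_rfl)]
  exact ENNReal.add_ne_top.2 ⟨h_near, h_far⟩

lemma oneSubCosIntegral_ne_zero (hp : 0 < p) : oneSubCosIntegral p ≠ 0 := by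
  have h_le : invPowMeasure p (Ioc (π / 2) π) ≤ oneSubCosIntegral p := by
    rw [oneSubCosIntegral, ← setLIntegral_one]
    refine (setLIntegral_mono' measurableSet_Ioc fun u hu => ?_).trans
      (setLIntegral_le_lintegral _ _)
    rw [ENNReal.one_le_ofReal]
    linarith [cos_nonpos_of_pi_div_two_le_of_le hu.1.le (by linarith [hu.2, pi_pos])]
  have hπ := pi_pos
  have h_lt : π ^ (-p) < (π / 2) ^ (-p) := rpow_lt_rpow_of_neg (by positivity) (by linarith)
    (by linarith)
  rw [invPowMeasure_Ioc hp (by positivity) (by linarith)] at h_le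
  exact ((ENNReal.ofReal_pos.2 (div_pos (sub_pos.2 h_lt) hp)).trans_le h_le).ne'

lemma lintegral_one_sub_cos_mul (hp : p ≠ 0) (x : ℝ) :
    ∫⁻ u, ENNReal.ofReal (1 - cos (u * x)) ∂(invPowMeasure p)
      = ENNReal.ofReal (|x| ^ p) * oneSubCosIntegral p := by
  rcases eq_or_ne x 0 with rfl | hx
  · simp [zero_rpow hp]
  · rw [oneSubCosIntegral, ← lintegral_comp_mul_left_invPowMeasure p (abs_pos.2 hx) (by fun_prop)]
    refine lintegral_congr fun u => ?_
    rw [← cos_abs (u * x), ← cos_abs (|x| * u), abs_mul, abs_mul, abs_abs, mul_comm]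

lemma integrable_cos_mul (μ : Measure ℝ) [IsFiniteMeasure μ] (u : ℝ) :
    Integrable (fun x => cos (u * x)) μ :=
  .of_bound (C := 1) (by fun_prop) (.of_forall fun _ => abs_cos_le_one _)

lemma integral_cos_mul_gaussianReal (u : ℝ) :
    ∫ x, cos (u * x) ∂(gaussianReal 0 1) = exp (-u ^ 2 / 2) := by
  have h_int : Integrable (fun x : ℝ => Complex.exp (u * x * Complex.I)) (gaussianReal 0 1) := by
    refine .of_bound (C := 1) (by fun_prop) (.of_forall fun x => ?_)
    rw [← Complex.ofReal_mul, Complex.norm_exp_ofReal_mul_I]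
  have h_re := congrArg Complex.re (charFun_gaussianReal (μ := 0) (v := 1) u)
  rw [charFun_apply_real, ← RCLike.re_eq_complex_re, ← integral_re h_int] at h_re
  have h_exp : Complex.exp (-u ^ 2 / 2) = (exp (-u ^ 2 / 2) : ℝ) := by push_cast; rfl
  simpa [RCLike.re_eq_complex_re, ← Complex.ofReal_mul, Complex.exp_ofReal_mul_I_re,
    ← neg_div, h_exp, -Complex.ofReal_exp] using h_re

/-- The absolute moment `E |G| ^ p` of a standard Gaussian variable `G`. -/
noncomputable def gaussianAbsMoment (p : ℝ) : ℝ := 2 ^ (p / 2) * Gamma ((p + 1) / 2) / √π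

lemma gaussianAbsMoment_pos (hp : -1 < p) : 0 < gaussianAbsMoment p := by
  have : 0 < Gamma ((p + 1) / 2) := Gamma_pos_of_pos (by linarith)
  unfold gaussianAbsMoment
  positivity

lemma integral_abs_rpow_gaussianReal (hp : -1 < p) :
    ∫ x, |x| ^ p ∂(gaussianReal 0 1) = gaussianAbsMoment p := by
  set g : ℝ → ℝ := fun y => (√(2 * π))⁻¹ * (y ^ p * exp (-(1 / 2) * y ^ (2 : ℝ)))
  have h_density (x : ℝ) : gaussianPDFReal 0 1 x • |x| ^ p = g |x| := by
    simp only [g, gaussianPDFReal, NNReal.coe_one, mul_one, sub_zero, smul_eq_mul, rpow_two, sq_abs]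
    rw [show -x ^ 2 / 2 = -(1 / 2) * x ^ 2 by ring]
    ring
  rw [integral_gaussianReal_eq_integral_smul one_ne_zero]
  simp only [h_density]
  rw [integral_comp_abs, integral_const_mul, integral_rpow_mul_exp_neg_mul_rpow two_pos hp
      (by norm_num), gaussianAbsMoment, neg_div, rpow_neg (by norm_num),
    ← inv_rpow (by norm_num), show (1 / 2 : ℝ)⁻¹ = 2 by norm_num, sqrt_mul zero_le_two, add_div,
    rpow_add two_pos, ← sqrt_eq_rpow]
  field_simp

lemma lintegral_one_sub_exp_neg_sq (hp : 0 < p) :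
    ∫⁻ u, ENNReal.ofReal (1 - exp (-u ^ 2 / 2)) ∂(invPowMeasure p)
      = ENNReal.ofReal (gaussianAbsMoment p) * oneSubCosIntegral p := by
  have h_average (u : ℝ) : ENNReal.ofReal (1 - exp (-u ^ 2 / 2))
      = ∫⁻ x, ENNReal.ofReal (1 - cos (u * x)) ∂(gaussianReal 0 1) := by
    have h_int := integrable_cos_mul (gaussianReal 0 1) u
    rw [← ofReal_integral_eq_lintegral_ofReal (f := fun x => 1 - cos (u * x))
        ((integrable_const 1).sub h_int) (.of_forall fun x => sub_nonneg.2 (cos_le_one _)),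
      integral_sub (integrable_const 1) h_int, integral_cos_mul_gaussianReal]
    simp
  have h_moment : Integrable (fun x => |x| ^ p) (gaussianReal 0 1) := by
    refine .of_integral_ne_zero ?_
    rw [integral_abs_rpow_gaussianReal (by linarith)]
    exact (gaussianAbsMoment_pos (by linarith)).ne'
  simp only [h_average]
  rw [lintegral_lintegral_swap (by fun_prop)]
  simp only [lintegral_one_sub_cos_mul hp.ne']
  rw [lintegral_mul_const _ (by fun_prop), ← integral_abs_rpow_gaussianReal (by linarith),
    ofReal_integral_eq_lintegral_ofReal h_moment (.of_forall fun x => by positivity)]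

end OneSubCos

section SignAverage

open Real Set
open scoped ENNReal

/-- The expectation of `g (x + ε₁ a₁ + ⋯ + εₙ aₙ)` over independent Rademacher signs `εᵢ`, for
`l = [a₁, …, aₙ]`. -/
noncomputable def signAverage (g : ℝ → ℝ) : List ℝ → ℝ → ℝ
  | [], x => g x
  | a :: l, x => (signAverage g l (x + a) + signAverage g l (x - a)) / 2

variable {g : ℝ → ℝ}

lemma signAverage_nonneg (hg : ∀ x, 0 ≤ g x) (l : List ℝ) (x : ℝ) : 0 ≤ signAverage g l x := by
  induction l generalizing x with
  | nil => exact hg x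
  | cons a l ih => exact div_nonneg (add_nonneg (ih _) (ih _)) zero_le_two

lemma signAverage_perm (g : ℝ → ℝ) {l l' : List ℝ} (h : l.Perm l') (x : ℝ) :
    signAverage g l x = signAverage g l' x := by
  induction h generalizing x with
  | nil => rfl
  | cons a _ ih => simp only [signAverage, ih]
  | swap a b l =>
    simp only [signAverage]
    rw [add_right_comm x b a, sub_right_comm x b a, add_sub_right_comm x b a,
      ← add_sub_right_comm x a b]
    ring
  | trans _ _ ih₁ ih₂ => rw [ih₁, ih₂]

lemma signAverage_neg (hg : g.Even) (l : List ℝ) (x : ℝ) :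
    signAverage g l (-x) = signAverage g l x := by
  induction l generalizing x with
  | nil => exact hg x
  | cons a l ih =>
    simp only [signAverage]
    rw [← ih (-x + a), ← ih (-x - a), add_comm]
    ring_nf

lemma signAverage_cons_zero (hg : g.Even) (a : ℝ) (l : List ℝ) :
    signAverage g (a :: l) 0 = signAverage g l a := by
  simp [signAverage, signAverage_neg hg]

lemma signAverage_cons_cons (g : ℝ → ℝ) (a b : ℝ) (l : List ℝ) (x : ℝ) :
    signAverage g (a :: b :: l) x
      = (signAverage g ((a + b) :: l) x + signAverage g ((a - b) :: l) x) / 2 := by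
  simp only [signAverage]
  ring_nf

lemma even_abs_rpow (p : ℝ) : (fun y : ℝ => |y| ^ p).Even := fun y => by
  dsimp only
  rw [abs_neg]

lemma signAverage_abs_rpow_nonneg (p : ℝ) (l : List ℝ) (x : ℝ) :
    0 ≤ signAverage (fun y => |y| ^ p) l x :=
  signAverage_nonneg (fun _ => rpow_nonneg (abs_nonneg _) _) l x

lemma signAverage_abs_rpow_map_mul (p c : ℝ) (l : List ℝ) (x : ℝ) :
    signAverage (fun y => |y| ^ p) (l.map (c * ·)) (c * x)
      = |c| ^ p * signAverage (fun y => |y| ^ p) l x := by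
  induction l generalizing x with
  | nil =>
    simp only [List.map_nil, signAverage]
    rw [abs_mul, mul_rpow (abs_nonneg _) (abs_nonneg _)]
  | cons a l ih =>
    simp only [List.map_cons, signAverage]
    rw [← mul_add, ← mul_sub, ih, ih]
    ring

/-- The sum of the squares of the entries of a list: the variance of the Rademacher sum with these
coefficients. -/
def sqSum (l : List ℝ) : ℝ := (l.map (· ^ 2)).sum

lemma sqSum_cons (a : ℝ) (l : List ℝ) : sqSum (a :: l) = a ^ 2 + sqSum l := by
  simp only [sqSum, List.map_cons, List.sum_cons]

lemma sqSum_nonneg (l : List ℝ) : 0 ≤ sqSum l :=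
  List.sum_nonneg (by simpa using fun a _ => sq_nonneg a)

lemma sqSum_map_mul (c : ℝ) (l : List ℝ) : sqSum (l.map (c * ·)) = c ^ 2 * sqSum l := by
  simp only [sqSum, List.map_map, Function.comp_def, mul_pow, List.sum_map_mul_left]

lemma sqSum_perm {l l' : List ℝ} (h : l.Perm l') : sqSum l = sqSum l' :=
  (h.map _).sum_eq

lemma signAverage_abs_rpow_two (l : List ℝ) (x : ℝ) :
    signAverage (fun y => |y| ^ (2 : ℝ)) l x = x ^ 2 + sqSum l := by
  induction l generalizing x with
  | nil => simp [signAverage, sqSum]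
  | cons a l ih =>
    simp only [signAverage, ih, sqSum_cons]
    ring

lemma measurable_prod_cos_mul (l : List ℝ) :
    Measurable fun u => (l.map fun a => cos (a * u)).prod := by
  simp only [← Fin.prod_univ_fun_getElem]
  fun_prop

lemma abs_prod_cos_mul_le_one (l : List ℝ) (u : ℝ) :
    |(l.map fun a => cos (a * u)).prod| ≤ 1 := by
  rw [← Fin.prod_univ_fun_getElem, Finset.abs_prod]
  exact Finset.prod_le_one (fun _ _ => abs_nonneg _) fun _ _ => abs_cos_le_one _

variable {p : ℝ}

lemma lintegral_one_sub_cos_mul_prod (hp : p ≠ 0) (l : List ℝ) (x : ℝ) :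
    ∫⁻ u, ENNReal.ofReal (1 - cos (u * x) * (l.map fun a => cos (a * u)).prod) ∂(invPowMeasure p)
      = ENNReal.ofReal (signAverage (fun y => |y| ^ p) l x) * oneSubCosIntegral p := by
  induction l generalizing x with
  | nil => simpa [signAverage] using lintegral_one_sub_cos_mul hp x
  | cons a l ih =>
    have h_meas := measurable_prod_cos_mul l
    have h_nonneg (u y : ℝ) : 0 ≤ 1 - cos (u * y) * (l.map fun a => cos (a * u)).prod := by
      refine sub_nonneg.2 ((le_abs_self _).trans ?_)
      rw [abs_mul]
      exact mul_le_one₀ (abs_cos_le_one _) (abs_nonneg _) (abs_prod_cos_mul_le_one l u)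
    have h_split (u : ℝ) :
        1 - cos (u * x) * ((a :: l).map fun a => cos (a * u)).prod
          = 1 / 2 * ((1 - cos (u * (x + a)) * (l.map fun a => cos (a * u)).prod)
            + (1 - cos (u * (x - a)) * (l.map fun a => cos (a * u)).prod)) := by
      rw [List.map_cons, List.prod_cons, mul_add u, mul_sub u, cos_add, cos_sub, mul_comm u a]
      ring
    simp only [h_split, ENNReal.ofReal_mul one_half_pos.le,
      ENNReal.ofReal_add (h_nonneg _ _) (h_nonneg _ _)]
    rw [lintegral_const_mul _ (by fun_prop), lintegral_add_left (by fun_prop), ih, ih, ← add_mul,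
      ← ENNReal.ofReal_add (signAverage_abs_rpow_nonneg p l _)
        (signAverage_abs_rpow_nonneg p l _), ← mul_assoc, ← ENNReal.ofReal_mul one_half_pos.le,
      signAverage, one_div_mul_eq_div]

end SignAverage

section BalancedKhintchine

open Real Set
open scoped ENNReal

lemma prod_le_sum_mul_abs_rpow_inv {ι : Type*} {s : Finset ι} {w y : ι → ℝ}
    (hw : ∀ i ∈ s, 0 ≤ w i) (hw_sum : ∑ i ∈ s, w i = 1) (hy : ∀ i ∈ s, |y i| ≤ 1) :
    ∏ i ∈ s, y i ≤ ∑ i ∈ s, w i * |y i| ^ (w i)⁻¹ :=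
  calc ∏ i ∈ s, y i
      ≤ ∏ i ∈ s, |y i| := (le_abs_self _).trans_eq (Finset.abs_prod s y)
    _ ≤ ∏ i ∈ s, (|y i| ^ (w i)⁻¹) ^ w i := by
        refine Finset.prod_le_prod (fun _ _ => abs_nonneg _) fun i hi => ?_
        rcases eq_or_ne (w i) 0 with h0 | h0
        · simpa [h0] using hy i hi
        · rw [rpow_inv_rpow (abs_nonneg _) h0]
    _ ≤ ∑ i ∈ s, w i * |y i| ^ (w i)⁻¹ :=
        geom_mean_le_arith_mean_weighted s w _ hw hw_sum fun _ _ => by positivity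

lemma le_lintegral_one_sub_prod {α ι : Type*} [MeasurableSpace α] {ν : Measure α} {s : Finset ι}
    {w : ι → ℝ} {y : ι → α → ℝ} {K : ℝ≥0∞} (hw : ∀ i ∈ s, 0 ≤ w i) (hw_sum : ∑ i ∈ s, w i = 1)
    (hy_meas : ∀ i, Measurable (y i)) (hy : ∀ i u, |y i u| ≤ 1)
    (hK : ∀ i ∈ s, w i ≠ 0 → K ≤ ∫⁻ u, ENNReal.ofReal (1 - |y i u| ^ (w i)⁻¹) ∂ν) :
    K ≤ ∫⁻ u, ENNReal.ofReal (1 - ∏ i ∈ s, y i u) ∂ν := by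
  have h_nonneg (i : ι) (hi : i ∈ s) (u : α) : 0 ≤ w i * (1 - |y i u| ^ (w i)⁻¹) :=
    mul_nonneg (hw i hi) <| sub_nonneg.2 <|
      rpow_le_one (abs_nonneg _) (hy i u) (inv_nonneg.2 (hw i hi))
  calc K = ∑ i ∈ s, ENNReal.ofReal (w i) * K := by
        rw [← Finset.sum_mul, ← ENNReal.ofReal_sum_of_nonneg hw, hw_sum, ENNReal.ofReal_one,
          one_mul]
    _ ≤ ∑ i ∈ s, ENNReal.ofReal (w i) * ∫⁻ u, ENNReal.ofReal (1 - |y i u| ^ (w i)⁻¹) ∂ν := by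
        refine Finset.sum_le_sum fun i hi => ?_
        rcases eq_or_ne (w i) 0 with h0 | h0
        · simp [h0]
        · exact mul_le_mul_right (hK i hi h0) _
    _ = ∫⁻ u, ENNReal.ofReal (∑ i ∈ s, w i * (1 - |y i u| ^ (w i)⁻¹)) ∂ν := by
        rw [lintegral_congr fun u => ENNReal.ofReal_sum_of_nonneg fun i hi => h_nonneg i hi u,
          lintegral_finsetSum _ fun i _ => by fun_prop]
        refine Finset.sum_congr rfl fun i hi => ?_
        simp only [ENNReal.ofReal_mul (hw i hi)]
        rw [lintegral_const_mul _ (by fun_prop)]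
    _ ≤ ∫⁻ u, ENNReal.ofReal (1 - ∏ i ∈ s, y i u) ∂ν := by
        refine lintegral_mono fun u => ENNReal.ofReal_le_ofReal ?_
        simp only [mul_sub, mul_one, Finset.sum_sub_distrib, hw_sum]
        linarith [prod_le_sum_mul_abs_rpow_inv hw hw_sum fun i _ => hy i u]

variable {p : ℝ}

lemma invPowMeasure_abs_cos_lt (p θ : ℝ) :
    invPowMeasure p {u | |cos u| < cos θ} = invPowMeasure p (cosSublevel θ) := by
  rw [invPowMeasure_apply p (measurableSet_lt (by fun_prop) measurable_const),
    invPowMeasure_apply p (measurableSet_cosSublevel θ)]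
  congr 2
  ext u
  simp only [cosSublevel, mem_inter_iff, mem_ofPred_eq, mem_Ioi]
  tauto

lemma invPowMeasure_exp_neg_sq_lt (p : ℝ) {θ : ℝ} (hθ : θ ∈ Ioo 0 (π / 2)) :
    invPowMeasure p {u | exp (-u ^ 2 / 2) < cos θ} = invPowMeasure p (Ioi (gaussThreshold θ)) := by
  rw [invPowMeasure_apply p (measurableSet_lt (by fun_prop) measurable_const),
    invPowMeasure_apply p measurableSet_Ioi]
  congr 2
  ext u
  refine and_congr_left fun hu => ?_
  rw [mem_Ioi, mem_ofPred_eq, gaussThreshold, sqrt_lt' hu,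
    ← lt_log_iff_exp_lt (cos_pos_of_mem_Ico (Ioo_subset_Ico_self hθ)), negLogCos]
  constructor <;> intro h <;> linarith

lemma invPowMeasure_exp_lt_le_abs_cos_lt (hp : p ∈ Icc (3 / 2) 2) {t₁ t₂ : ℝ}
    (ht₁ : t₁ ∈ Ioo 0 1) (ht₂ : t₂ ∈ Ioo 0 1) (ht : t₁ < t₂)
    (h : invPowMeasure p {u | exp (-u ^ 2 / 2) < t₁} < invPowMeasure p {u | |cos u| < t₁}) :
    invPowMeasure p {u | exp (-u ^ 2 / 2) < t₂} ≤ invPowMeasure p {u | |cos u| < t₂} := by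
  have h_arccos {t : ℝ} (ht : t ∈ Ioo 0 1) :
      arccos t ∈ Ioo 0 (π / 2) ∧ cos (arccos t) = t :=
    ⟨⟨arccos_pos.2 ht.2, arccos_lt_pi_div_two.2 ht.1⟩,
      cos_arccos (by linarith [ht.1]) ht.2.le⟩
  obtain ⟨hθ₁, h_cos₁⟩ := h_arccos ht₁
  obtain ⟨hθ₂, h_cos₂⟩ := h_arccos ht₂
  rw [← h_cos₁, invPowMeasure_exp_neg_sq_lt p hθ₁, invPowMeasure_abs_cos_lt] at h
  rw [← h_cos₂, invPowMeasure_exp_neg_sq_lt p hθ₂, invPowMeasure_abs_cos_lt]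
  refine invPowMeasure_gaussThreshold_le_of_lt hp hθ₂.1 ?_ hθ₁.2 h
  exact strictAntiOn_arccos ⟨by linarith [ht₁.1], ht₁.2.le⟩ ⟨by linarith [ht₂.1], ht₂.2.le⟩ ht

lemma lintegral_one_sub_exp_neg_sq_rpow (hp : 0 < p) {s : ℝ} (hs : 0 < s) :
    ∫⁻ u, ENNReal.ofReal (1 - exp (-u ^ 2 / 2) ^ s) ∂(invPowMeasure p)
      = ENNReal.ofReal (s ^ (p / 2))
        * (ENNReal.ofReal (gaussianAbsMoment p) * oneSubCosIntegral p) := by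
  rw [← lintegral_one_sub_exp_neg_sq hp, show p / 2 = 1 / 2 * p by ring, rpow_mul hs.le,
    ← sqrt_eq_rpow, ← lintegral_comp_mul_left_invPowMeasure p (sqrt_pos.2 hs) (by fun_prop)]
  refine lintegral_congr fun u => ?_
  rw [mul_pow, sq_sqrt hs.le, ← exp_mul]
  ring_nf

lemma lintegral_one_sub_abs_cos_sq (hp : p ≠ 0) :
    ∫⁻ u, ENNReal.ofReal (1 - |cos u| ^ (2 : ℝ)) ∂(invPowMeasure p)
      = ENNReal.ofReal (2 ^ p / 2) * oneSubCosIntegral p := by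
  have h_double (u : ℝ) : 1 - |cos u| ^ (2 : ℝ) = (1 - cos (u * 2)) * 2⁻¹ := by
    rw [rpow_two, sq_abs, mul_comm u 2, cos_two_mul]
    ring
  simp only [h_double, ENNReal.ofReal_mul (sub_nonneg.2 (cos_le_one _))]
  rw [lintegral_mul_const _ (by fun_prop), lintegral_one_sub_cos_mul hp, mul_right_comm,
    ← ENNReal.ofReal_mul (by positivity), abs_two, ← div_eq_mul_inv]

lemma gaussianAbsMoment_mul_le (hp : p ∈ Ico (3 / 2) 2) (hG : Gamma ((p + 1) / 2) ≤ √π / 2)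
    {s : ℝ} (hs : 2 ≤ s) :
    ENNReal.ofReal (s ^ (p / 2)) * (ENNReal.ofReal (gaussianAbsMoment p) * oneSubCosIntegral p)
      ≤ ∫⁻ u, ENNReal.ofReal (1 - |cos u| ^ s) ∂(invPowMeasure p) := by
  have hp0 : 0 < p := by linarith [hp.1]
  have h_two : 2 ^ (p / 2) * gaussianAbsMoment p ≤ 2 ^ p / 2 := by
    rw [gaussianAbsMoment, mul_div_assoc, ← mul_assoc, ← rpow_add two_pos, add_halves,
      div_eq_mul_inv (2 ^ p)]
    gcongr
    rw [div_le_iff₀ (by positivity)]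
    linarith
  rw [← lintegral_one_sub_exp_neg_sq_rpow hp0 (by linarith)]
  refine lintegral_one_sub_rpow_le_of_singleCrossing (f := fun u => |cos u|) (by fun_prop)
    (by fun_prop) (fun u => ⟨abs_nonneg _, abs_cos_le_one u⟩)
    (fun u => ⟨(exp_pos _).le, exp_le_one_iff.2 (by nlinarith [sq_nonneg u])⟩)
    (fun t₁ ht₁ t₂ ht₂ => invPowMeasure_exp_lt_le_abs_cos_lt ⟨hp.1, hp.2.le⟩ ht₁ ht₂)
    one_le_two hs ?_ ?_
  · rw [lintegral_one_sub_abs_cos_sq hp0.ne', lintegral_one_sub_exp_neg_sq_rpow hp0 two_pos,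
      ← mul_assoc, ← ENNReal.ofReal_mul (by positivity)]
    gcongr
  · rw [lintegral_one_sub_abs_cos_sq hp0.ne']
    exact ENNReal.mul_ne_top ENNReal.ofReal_ne_top (oneSubCosIntegral_ne_top ⟨hp0, hp.2⟩)

lemma gaussianAbsMoment_mul_le_of_sq_le_half (hp : p ∈ Ico (3 / 2) 2)
    (hG : Gamma ((p + 1) / 2) ≤ √π / 2) {a : ℝ} (ha : a ^ 2 ≤ 1 / 2) (ha0 : a ≠ 0) :
    ENNReal.ofReal (gaussianAbsMoment p) * oneSubCosIntegral p
      ≤ ∫⁻ u, ENNReal.ofReal (1 - |cos (a * u)| ^ (a ^ 2)⁻¹) ∂(invPowMeasure p) := by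
  have h_scale : |a| ^ p * (a ^ 2)⁻¹ ^ (p / 2) = 1 := by
    rw [← sq_abs, ← rpow_two, ← rpow_neg (abs_nonneg a), ← rpow_mul (abs_nonneg a),
      ← rpow_add (abs_pos.2 ha0), show p + -2 * (p / 2) = 0 by ring, rpow_zero]
  have h_exponent : 2 ≤ (a ^ 2)⁻¹ := by
    rw [le_inv_comm₀ two_pos (by positivity)]
    linarith
  have h_abs (u : ℝ) : |cos (a * u)| = |cos (|a| * u)| := by
    rw [← cos_abs (a * u), ← cos_abs (|a| * u), abs_mul, abs_mul, abs_abs]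
  simp only [h_abs]
  rw [lintegral_comp_mul_left_invPowMeasure p (abs_pos.2 ha0)
    (h := fun u => ENNReal.ofReal (1 - |cos u| ^ (a ^ 2)⁻¹)) (by fun_prop)]
  refine le_of_eq_of_le ?_ (mul_le_mul_right (gaussianAbsMoment_mul_le hp hG h_exponent) _)
  rw [← mul_assoc, ← ENNReal.ofReal_mul (by positivity), h_scale, ENNReal.ofReal_one, one_mul]

lemma gaussianAbsMoment_le_signAverage (hp : p ∈ Ico (3 / 2) 2)
    (hG : Gamma ((p + 1) / 2) ≤ √π / 2) {l : List ℝ} (hl_sum : sqSum l = 1)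
    (hl : ∀ a ∈ l, a ^ 2 ≤ 1 / 2) :
    gaussianAbsMoment p ≤ signAverage (fun y => |y| ^ p) l 0 := by
  have hp0 : 0 < p := by linarith [hp.1]
  rw [← ENNReal.ofReal_le_ofReal_iff (signAverage_abs_rpow_nonneg p l 0),
    ← ENNReal.mul_le_mul_iff_left (oneSubCosIntegral_ne_zero hp0)
      (oneSubCosIntegral_ne_top ⟨hp0, hp.2⟩), ← lintegral_one_sub_cos_mul_prod hp0.ne']
  simp only [mul_zero, cos_zero, one_mul, ← Fin.prod_univ_fun_getElem]
  refine le_lintegral_one_sub_prod (w := fun i : Fin l.length => l[i] ^ 2)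
    (fun i _ => sq_nonneg _) ?_ (fun i => by fun_prop) (fun i u => abs_cos_le_one _)
    fun i _ hi => ?_
  · exact (Fin.sum_univ_fun_getElem l (· ^ 2)).trans hl_sum
  · exact gaussianAbsMoment_mul_le_of_sq_le_half hp hG (hl _ (List.getElem_mem _))
      ((pow_ne_zero_iff two_ne_zero).1 hi)

end BalancedKhintchine

section SinglePair

open Real Set

lemma hasDerivAt_six_sub_two_mul_sq (x : ℝ) :
    HasDerivAt (fun y : ℝ => 6 - 2 * y ^ 2) (-(4 * x)) x :=
  (((hasDerivAt_pow 2 x).const_mul 2).const_sub 6).congr_deriv (by norm_num; ring)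

/-- The margin in the logarithmic form of `rpow_sub_rpow_le` as `r → 1`; it is concave on
`[0, 1]` and vanishes at both endpoints. -/
noncomputable def logMargin (x : ℝ) : ℝ :=
  (1 + x) * log (1 + x) - (1 - x) * log (1 - x) - x * log (6 - 2 * x ^ 2)

/-- The derivative of `logMargin` on `(0, 1)`. -/
noncomputable def logMarginDeriv (x : ℝ) : ℝ :=
  2 + log (1 + x) + log (1 - x) - log (6 - 2 * x ^ 2) + 4 * x ^ 2 / (6 - 2 * x ^ 2)

lemma hasDerivAt_logMargin {x : ℝ} (hx : x ∈ Ioo 0 1) :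
    HasDerivAt logMargin (logMarginDeriv x) x := by
  obtain ⟨hx0, hx1⟩ := hx
  have hpos : 1 + x ≠ 0 := by linarith
  have hneg : 1 - x ≠ 0 := by linarith
  have hsq : 6 - 2 * x ^ 2 ≠ 0 := by nlinarith
  have dpos := (hasDerivAt_id x).const_add 1
  have dneg := (hasDerivAt_id x).const_sub 1
  refine (((dpos.mul (dpos.log hpos)).sub (dneg.mul (dneg.log hneg))).sub
    ((hasDerivAt_id x).mul ((hasDerivAt_six_sub_two_mul_sq x).log hsq))).congr_deriv ?_
  simp only [id, logMarginDeriv]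
  field_simp
  ring

lemma hasDerivAt_logMarginDeriv {x : ℝ} (hx : x ∈ Ioo 0 1) :
    HasDerivAt logMarginDeriv (-(8 * x ^ 3) / ((1 + x) * (1 - x) * (3 - x ^ 2) ^ 2)) x := by
  obtain ⟨hx0, hx1⟩ := hx
  have hpos : 1 + x ≠ 0 := by linarith
  have hneg : 1 - x ≠ 0 := by linarith
  have hsq : 3 - x ^ 2 ≠ 0 := by nlinarith
  have hsq2 : 6 - 2 * x ^ 2 ≠ 0 := by nlinarith
  have dsq := hasDerivAt_six_sub_two_mul_sq x
  refine ((((((hasDerivAt_id x).const_add 1).log hpos).const_add 2).add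
    (((hasDerivAt_id x).const_sub 1).log hneg)).sub (dsq.log hsq2)).add
    (((hasDerivAt_pow 2 x).const_mul 4).div dsq hsq2) |>.congr_deriv ?_
  simp only [id, show 6 - 2 * x ^ 2 = 2 * (3 - x ^ 2) by ring]
  field_simp
  norm_num
  ring

lemma concaveOn_logMargin : ConcaveOn ℝ (Icc 0 1) logMargin := by
  refine concaveOn_of_hasDerivWithinAt2_nonpos (convex_Icc 0 1) (f' := logMarginDeriv)
    (f'' := fun x => -(8 * x ^ 3) / ((1 + x) * (1 - x) * (3 - x ^ 2) ^ 2)) ?_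
    (fun x hx => ?_) (fun x hx => ?_) (fun x hx => ?_)
  · refine (((continuous_mul_log.comp (by fun_prop : Continuous fun x : ℝ => 1 + x)).sub
      (continuous_mul_log.comp (by fun_prop : Continuous fun x : ℝ => 1 - x))).continuousOn).sub
      (continuousOn_id.mul (ContinuousOn.log (by fun_prop) fun x hx => ?_))
    nlinarith [hx.1, hx.2]
  all_goals rw [interior_Icc] at hx
  · exact (hasDerivAt_logMargin hx).hasDerivWithinAt
  · exact (hasDerivAt_logMarginDeriv hx).hasDerivWithinAt
  · have hx0 := hx.1
    have hx1 : 0 < 1 - x := sub_pos.2 hx.2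
    exact div_nonpos_of_nonpos_of_nonneg (by simp only [Left.neg_nonpos_iff]; positivity)
      (by positivity)

lemma logMargin_nonneg {x : ℝ} (hx : x ∈ Icc 0 1) : 0 ≤ logMargin x := by
  have hzero : logMargin 0 = 0 := by simp [logMargin]
  have hone : logMargin 1 = 0 := by
    have hlog : log 4 = 2 * log 2 := by
      rw [show (4 : ℝ) = 2 ^ 2 by norm_num, log_pow, Nat.cast_ofNat]
    norm_num [logMargin, hlog]
  have h := concaveOn_logMargin.2 (left_mem_Icc.2 zero_le_one) (right_mem_Icc.2 zero_le_one)
    (sub_nonneg.2 hx.2) hx.1 (sub_add_cancel 1 x)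
  simpa only [smul_eq_mul, hzero, hone, mul_zero, mul_one, zero_add] using h

lemma log_one_sub_rpow_le {X r : ℝ} (hX : X ∈ Ioo 0 1) (hr : r ∈ Ioc 0 1) :
    log (1 - X ^ r) ≤ log (1 - X) + (r - 1) * (-X * log X / (1 - X)) := by
  obtain ⟨hX0, hX1⟩ := hX
  obtain ⟨hr0, hr1⟩ := hr
  have hlt : ∀ s ∈ Icc r 1, X ^ s < 1 := fun s hs => rpow_lt_one hX0.le hX1 (hr0.trans_le hs.1)
  have hderiv : ∀ s ∈ Icc r 1,
      HasDerivAt (fun s => log (1 - X ^ s) - (s - 1) * (-X * log X / (1 - X)))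
        (-(X ^ s * log X) / (1 - X ^ s) - -X * log X / (1 - X)) s := fun s hs => by
    have d := ((hasStrictDerivAt_const_rpow hX0 s).hasDerivAt.const_sub 1).log
      (sub_pos.2 (hlt s hs)).ne'
    exact (d.sub (((hasDerivAt_id s).sub_const 1).mul_const _)).congr_deriv (by rw [one_mul])
  have hmono : MonotoneOn (fun s => log (1 - X ^ s) - (s - 1) * (-X * log X / (1 - X)))
      (Icc r 1) := by
    refine monotoneOn_of_hasDerivWithinAt_nonneg (convex_Icc r 1)
      (fun s hs => (hderiv s hs).continuousAt.continuousWithinAt)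
      (fun s hs => (hderiv s (interior_subset hs)).hasDerivWithinAt) fun s hs => ?_
    replace hs := interior_subset hs
    have hle : X ≤ X ^ s := by
      simpa only [rpow_one] using rpow_le_rpow_of_exponent_ge hX0 hX1.le hs.2
    rw [sub_nonneg, div_le_div_iff₀ (sub_pos.2 hX1) (sub_pos.2 (hlt s hs))]
    nlinarith [mul_nonneg (neg_nonneg.2 (log_neg hX0 hX1).le) (sub_nonneg.2 hle)]
  have h := hmono (left_mem_Icc.2 hr1) (right_mem_Icc.2 hr1) hr1
  simp only [rpow_one, sub_self, zero_mul, sub_zero] at h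
  linarith

lemma log_sub_rpow_div_le {a r : ℝ} (ha : a ∈ Ioo 0 1) (hr : r ∈ Ioc 0 1) :
    log (1 - ((1 - a) / (1 + a)) ^ r) ≤ log (2 * a) - log (1 + a)
      + (r - 1) * (((1 + a) * log (1 + a) - (1 - a) * log (1 - a)) / (2 * a) - log (1 + a)) := by
  obtain ⟨ha0, ha1⟩ := ha
  have hneg : 0 < 1 - a := sub_pos.2 ha1
  have hlt : (1 - a) / (1 + a) < 1 := by rw [div_lt_one (by positivity)]; linarith
  refine (log_one_sub_rpow_le ⟨by positivity, hlt⟩ hr).trans_eq ?_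
  rw [show 1 - (1 - a) / (1 + a) = 2 * a / (1 + a) by field_simp; ring,
    log_div hneg.ne' (by positivity), log_div (by positivity) (by positivity)]
  field_simp
  ring

lemma rpow_sub_rpow_le {a r : ℝ} (ha : a ∈ Ioo 0 1) (hr : r ∈ Ioc 0 1) :
    (1 + a) ^ r - (1 - a) ^ r ≤ 2 * a * (6 - 2 * a ^ 2) ^ ((r - 1) / 2) := by
  have hlog := log_sub_rpow_div_le ha hr
  have hmargin := logMargin_nonneg (Ioo_subset_Icc_self ha)
  obtain ⟨ha0, ha1⟩ := ha
  obtain ⟨hr0, hr1⟩ := hr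
  have hneg : 0 < 1 - a := sub_pos.2 ha1
  have hsq : 0 < 6 - 2 * a ^ 2 := by nlinarith
  have hfactor : (1 + a) ^ r - (1 - a) ^ r = (1 + a) ^ r * (1 - ((1 - a) / (1 + a)) ^ r) := by
    rw [div_rpow hneg.le (by positivity)]
    field_simp
  have hpos : 0 < 1 - ((1 - a) / (1 + a)) ^ r := by
    refine sub_pos.2 (rpow_lt_one (by positivity) ?_ hr0)
    rw [div_lt_one (by positivity)]
    linarith
  have hmean : log (6 - 2 * a ^ 2) / 2
      ≤ ((1 + a) * log (1 + a) - (1 - a) * log (1 - a)) / (2 * a) := by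
    rw [div_le_div_iff₀ two_pos (by positivity)]
    unfold logMargin at hmargin
    linarith
  rw [hfactor, ← log_le_log_iff (by positivity) (by positivity),
    log_mul (by positivity) hpos.ne', log_mul (by positivity) (by positivity),
    log_rpow (by positivity), log_rpow hsq]
  nlinarith [mul_le_mul_of_nonneg_left hmean (sub_nonneg.2 hr1)]

lemma antitoneOn_rpow_add_rpow_add_rpow {p : ℝ} (hp : p ∈ Ioc 1 2) :
    AntitoneOn (fun a : ℝ => (1 + a) ^ p + (1 - a) ^ p + (6 - 2 * a ^ 2) ^ (p / 2))
      (Icc 0 1) := by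
  obtain ⟨hp1, hp2⟩ := hp
  have hderiv : ∀ x ∈ Icc (0 : ℝ) 1,
      HasDerivAt (fun a : ℝ => (1 + a) ^ p + (1 - a) ^ p + (6 - 2 * a ^ 2) ^ (p / 2))
        (1 * p * (1 + x) ^ (p - 1) + -1 * p * (1 - x) ^ (p - 1)
          + -(4 * x) * (p / 2) * (6 - 2 * x ^ 2) ^ (p / 2 - 1)) x := fun x hx => by
    have hsq : 6 - 2 * x ^ 2 ≠ 0 := by nlinarith [hx.1, hx.2]
    exact ((((hasDerivAt_id x).const_add 1).rpow_const (Or.inr hp1.le)).add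
      (((hasDerivAt_id x).const_sub 1).rpow_const (Or.inr hp1.le))).add
      ((hasDerivAt_six_sub_two_mul_sq x).rpow_const (Or.inl hsq))
  refine antitoneOn_of_hasDerivWithinAt_nonpos (convex_Icc 0 1)
    (fun x hx => (hderiv x hx).continuousAt.continuousWithinAt)
    (fun x hx => (hderiv x (interior_subset hx)).hasDerivWithinAt) fun x hx => ?_
  rw [interior_Icc] at hx
  have h := rpow_sub_rpow_le hx (r := p - 1) ⟨by linarith, by linarith⟩
  rw [show (p - 1 - 1) / 2 = p / 2 - 1 by ring] at h
  nlinarith [mul_le_mul_of_nonneg_left h (zero_le_one.trans hp1.le)]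

lemma two_rpow_add_one_le {a p : ℝ} (ha : a ∈ Icc 0 1) (hp : p ∈ Ioc 1 2) :
    2 ^ (p + 1) ≤ (1 + a) ^ p + (1 - a) ^ p + (6 - 2 * a ^ 2) ^ (p / 2) := by
  have h := antitoneOn_rpow_add_rpow_add_rpow hp ha (right_mem_Icc.2 zero_le_one) ha.2
  refine le_of_eq_of_le ?_ h
  norm_num only
  rw [zero_rpow (zero_lt_one.trans hp.1).ne', add_zero, show (4 : ℝ) = 2 ^ (2 : ℝ) by norm_num,
    ← rpow_mul two_pos.le, mul_div_cancel₀ p two_ne_zero, rpow_add two_pos, rpow_one, mul_two]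

end SinglePair

section DominantCoefficient

open Real Set

/-- Nazarov and Podkorytov's minorant. With `q = p / 2`, comparing `E |1 + ∑ aᵢ εᵢ| ^ p` to
`haagerupPhi q (∑ aᵢ²)` in place of `(1 + ∑ aᵢ²) ^ q` makes an induction on the number of
coefficients possible. -/
noncomputable def haagerupPhi (q x : ℝ) : ℝ :=
  if 1 ≤ x then (1 + x) ^ q else 2 * 2 ^ q - (3 - x) ^ q

variable {q : ℝ}

lemma sub_mul_rpow_add_sub_mul_rpow_le (hq : q ∈ Icc 0 1) {s t M : ℝ} (hs : 0 ≤ s) (hsM : s < M)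
    (ht : t ∈ Icc s M) : (M - t) * s ^ q + (t - s) * M ^ q ≤ (M - s) * t ^ q := by
  have hM : 0 < M - s := sub_pos.2 hsM
  have h := (concaveOn_rpow hq.1 hq.2).2 (mem_Ici.2 hs) (mem_Ici.2 (hs.trans hsM.le))
    (div_nonneg (sub_nonneg.2 ht.2) hM.le) (div_nonneg (sub_nonneg.2 ht.1) hM.le)
    (by field_simp; ring)
  simp only [smul_eq_mul] at h
  rw [show (M - t) / (M - s) * s + (t - s) / (M - s) * M = t by field_simp; ring,
    div_mul_eq_mul_div, div_mul_eq_mul_div, ← add_div, div_le_iff₀ hM] at h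
  linarith

lemma rpow_add_rpow_le_two_mul_rpow_midpoint (hq : q ∈ Icc 0 1) {s t : ℝ} (hs : 0 ≤ s)
    (ht : 0 ≤ t) : s ^ q + t ^ q ≤ 2 * ((s + t) / 2) ^ q := by
  have h := (concaveOn_rpow hq.1 hq.2).2 (mem_Ici.2 hs) (mem_Ici.2 ht) one_half_pos.le
    one_half_pos.le (add_halves 1)
  simp only [smul_eq_mul] at h
  rw [show 1 / 2 * s + 1 / 2 * t = (s + t) / 2 by ring] at h
  linarith

lemma one_add_rpow_le_haagerupPhi (hq : q ∈ Icc 0 1) {x : ℝ} (hx : 0 ≤ x) :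
    (1 + x) ^ q ≤ haagerupPhi q x := by
  unfold haagerupPhi
  split_ifs with h
  · exact le_rfl
  · have hmid := rpow_add_rpow_le_two_mul_rpow_midpoint hq (add_nonneg zero_le_one hx)
      (show 0 ≤ 3 - x by linarith)
    rw [show (1 + x + (3 - x)) / 2 = 2 by ring] at hmid
    linarith

lemma haagerupPhi_nonneg (hq : q ∈ Icc 0 1) {x : ℝ} (hx : 0 ≤ x) : 0 ≤ haagerupPhi q x :=
  (rpow_nonneg (add_nonneg zero_le_one hx) q).trans (one_add_rpow_le_haagerupPhi hq hx)

lemma haagerupPhi_midpoint_le (hq : q ∈ Icc 0 1) {x y : ℝ} (hx : 0 ≤ x) (hy : 0 ≤ y)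
    (hxy : x + y < 2) :
    haagerupPhi q ((x + y) / 2) ≤ (haagerupPhi q x + haagerupPhi q y) / 2 := by
  wlog h : x ≤ y generalizing x y
  · rw [add_comm x, add_comm (haagerupPhi q x)]
    exact this hy hx (by linarith) (le_of_not_ge h)
  unfold haagerupPhi
  rw [if_neg (by linarith : ¬ 1 ≤ x), if_neg (by linarith : ¬ 1 ≤ (x + y) / 2)]
  split_ifs with hy1
  · have hmid := sub_mul_rpow_add_sub_mul_rpow_le hq zero_le_two (M := 3 - x)
      (t := 3 - (x + y) / 2) (by linarith) ⟨by linarith, by linarith⟩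
    have htop := sub_mul_rpow_add_sub_mul_rpow_le hq zero_le_two (M := 3 - x) (t := 1 + y)
      (by linarith) ⟨by linarith, by linarith⟩
    nlinarith
  · have hmid := rpow_add_rpow_le_two_mul_rpow_midpoint hq (show 0 ≤ 3 - x by linarith)
      (show 0 ≤ 3 - y by linarith)
    rw [show (3 - x + (3 - y)) / 2 = 3 - (x + y) / 2 by ring] at hmid
    linarith

variable {p C : ℝ}

lemma mul_haagerupPhi_sq_le (hp : p ∈ Ioc 1 2) (hC : C ≤ 2 ^ (p / 2 - 1)) {a : ℝ}
    (ha : a ^ 2 < 1) :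
    C * haagerupPhi (p / 2) (a ^ 2) ≤ (|1 + a| ^ p + |1 - a| ^ p) / 2 := by
  have ha1 : |a| < 1 := (sq_lt_one_iff_abs_lt_one a).1 ha
  obtain ⟨hlower, hupper⟩ := abs_lt.1 ha1
  have habs : |1 + a| ^ p + |1 - a| ^ p = (1 + |a|) ^ p + (1 - |a|) ^ p := by
    rw [abs_of_pos (show 0 < 1 + a by linarith), abs_of_pos (show 0 < 1 - a by linarith)]
    rcases abs_choice a with h | h <;> rw [h]
    rw [sub_neg_eq_add, ← sub_eq_add_neg, add_comm]
  have hbase := two_rpow_add_one_le ⟨abs_nonneg a, ha1.le⟩ hp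
  have hsix : (6 - 2 * a ^ 2) ^ (p / 2) = 2 ^ (p / 2) * (3 - a ^ 2) ^ (p / 2) := by
    rw [← mul_rpow zero_le_two (by linarith)]
    ring_nf
  have htwo : (2 : ℝ) ^ (p + 1) = 2 * (2 ^ (p / 2) * 2 ^ (p / 2)) := by
    rw [← rpow_add two_pos, add_halves, rpow_add two_pos, rpow_one, mul_comm]
  rw [sq_abs, hsix, htwo] at hbase
  refine (mul_le_mul_of_nonneg_right hC (haagerupPhi_nonneg ⟨by linarith [hp.1],
    by linarith [hp.2]⟩ (sq_nonneg a))).trans ?_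
  rw [habs, haagerupPhi, if_neg ha.not_ge, rpow_sub two_pos, rpow_one]
  linarith

lemma mul_rpow_le_signAverage_cons (hp : p ∈ Icc 0 2) (hC : 0 ≤ C) {a : ℝ} (ha : a ≠ 0)
    {l : List ℝ}
    (h : C * haagerupPhi (p / 2) (sqSum (l.map (a⁻¹ * ·)))
      ≤ signAverage (fun y => |y| ^ p) (l.map (a⁻¹ * ·)) 1) :
    C * sqSum (a :: l) ^ (p / 2) ≤ signAverage (fun y => |y| ^ p) (a :: l) 0 := by
  have hl : (l.map (a⁻¹ * ·)).map (a * ·) = l := by simp [Function.comp_def, ha]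
  have habs : (a ^ 2) ^ (p / 2) = |a| ^ p := by
    rw [← sq_abs, ← rpow_two, ← rpow_mul (abs_nonneg _), mul_div_cancel₀ p two_ne_zero]
  have hsum : sqSum (a :: l) = a ^ 2 * (1 + sqSum (l.map (a⁻¹ * ·))) := by
    rw [sqSum_cons, sqSum_map_mul]
    field_simp
  have hnonneg := sqSum_nonneg (l.map (a⁻¹ * ·))
  calc C * sqSum (a :: l) ^ (p / 2)
      = |a| ^ p * (C * (1 + sqSum (l.map (a⁻¹ * ·))) ^ (p / 2)) := by
        rw [hsum, mul_rpow (sq_nonneg a) (by positivity), habs]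
        ring
    _ ≤ |a| ^ p * (C * haagerupPhi (p / 2) (sqSum (l.map (a⁻¹ * ·)))) := by
        gcongr
        exact one_add_rpow_le_haagerupPhi ⟨by linarith [hp.1], by linarith [hp.2]⟩ hnonneg
    _ ≤ |a| ^ p * signAverage (fun y => |y| ^ p) (l.map (a⁻¹ * ·)) 1 := by gcongr
    _ = signAverage (fun y => |y| ^ p) (a :: l) 0 := by
        rw [← signAverage_abs_rpow_map_mul, hl, mul_one, signAverage_cons_zero (even_abs_rpow p)]

lemma mul_haagerupPhi_le_signAverage_succ (hp : p ∈ Ioc 1 2) (hC0 : 0 ≤ C)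
    (hC : C ≤ 2 ^ (p / 2 - 1)) {n : ℕ}
    (ih : ∀ l : List ℝ, l.length = n →
      C * haagerupPhi (p / 2) (sqSum l) ≤ signAverage (fun y => |y| ^ p) l 1)
    {l : List ℝ} (hl : l.length = n + 1) (hl1 : sqSum l < 1) :
    C * haagerupPhi (p / 2) (sqSum l) ≤ signAverage (fun y => |y| ^ p) l 1 := by
  match l, hl, hl1 with
  | [a], _, ha =>
    have hsq : sqSum [a] = a ^ 2 := by simp [sqSum]
    rw [hsq] at ha ⊢
    exact mul_haagerupPhi_sq_le hp hC ha
  | a :: b :: l, hl, hl1 =>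
    have hsum := ih ((a + b) :: l) (Nat.succ_injective hl)
    have hdiff := ih ((a - b) :: l) (Nat.succ_injective hl)
    have hnonneg := sqSum_nonneg l
    simp only [sqSum_cons] at hsum hdiff hl1 ⊢
    have hmid := haagerupPhi_midpoint_le (q := p / 2) ⟨by linarith [hp.1], by linarith [hp.2]⟩
      (add_nonneg (sq_nonneg (a + b)) hnonneg) (add_nonneg (sq_nonneg (a - b)) hnonneg)
      (by linarith)
    rw [show ((a + b) ^ 2 + sqSum l + ((a - b) ^ 2 + sqSum l)) / 2 = a ^ 2 + (b ^ 2 + sqSum l) by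
      ring] at hmid
    rw [signAverage_cons_cons]
    linarith [mul_le_mul_of_nonneg_left hmid hC0]

lemma mul_haagerupPhi_le_signAverage_of_balanced (hp : p ∈ Icc 0 2) (hC0 : 0 ≤ C)
    (hbal : ∀ l : List ℝ, (∀ a ∈ l, a ^ 2 ≤ sqSum l / 2) →
      C * sqSum l ^ (p / 2) ≤ signAverage (fun y => |y| ^ p) l 0)
    {n : ℕ} (hlt : ∀ l : List ℝ, l.length = n → sqSum l < 1 →
      C * haagerupPhi (p / 2) (sqSum l) ≤ signAverage (fun y => |y| ^ p) l 1)
    {l : List ℝ} (hl : l.length = n) :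
    C * haagerupPhi (p / 2) (sqSum l) ≤ signAverage (fun y => |y| ^ p) l 1 := by
  rcases lt_or_ge (sqSum l) 1 with hl1 | hl1
  · exact hlt l hl hl1
  rw [haagerupPhi, if_pos hl1, ← signAverage_cons_zero (even_abs_rpow p),
    show 1 + sqSum l = sqSum (1 :: l) by rw [sqSum_cons, one_pow]]
  by_cases hbalanced : ∀ a ∈ 1 :: l, a ^ 2 ≤ sqSum (1 :: l) / 2
  · exact hbal _ hbalanced
  push Not at hbalanced
  obtain ⟨a, ha, hbig⟩ := hbalanced
  rw [sqSum_cons] at hbig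
  have hal : a ∈ l := (List.mem_cons.1 ha).resolve_left (by rintro rfl; linarith)
  have ha0 : a ≠ 0 := by rintro rfl; linarith
  have hperm := List.perm_cons_erase hal
  have hperm' : (1 :: l).Perm (a :: 1 :: l.erase a) := (hperm.cons 1).trans (.swap a 1 _)
  have hlen : (1 :: l.erase a).length = n := by
    rw [← hl, hperm.length_eq, List.length_cons, List.length_cons]
  rw [sqSum_perm hperm', signAverage_perm _ hperm']
  refine mul_rpow_le_signAverage_cons hp hC0 ha0 (hlt _ (by rwa [List.length_map]) ?_)
  rw [sqSum_perm hperm, sqSum_cons] at hbig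
  rw [sqSum_map_mul, sqSum_cons, inv_pow, inv_mul_lt_iff₀ (by positivity)]
  linarith

lemma mul_haagerupPhi_le_signAverage (hp : p ∈ Ioc 1 2) (hC0 : 0 ≤ C) (hC : C ≤ 2 ^ (p / 2 - 1))
    (hbal : ∀ l : List ℝ, (∀ a ∈ l, a ^ 2 ≤ sqSum l / 2) →
      C * sqSum l ^ (p / 2) ≤ signAverage (fun y => |y| ^ p) l 0) (l : List ℝ) :
    C * haagerupPhi (p / 2) (sqSum l) ≤ signAverage (fun y => |y| ^ p) l 1 := by
  have hp' : p ∈ Icc 0 2 := ⟨by linarith [hp.1], hp.2⟩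
  have hlt (n : ℕ) : ∀ l' : List ℝ, l'.length = n → sqSum l' < 1 →
      C * haagerupPhi (p / 2) (sqSum l') ≤ signAverage (fun y => |y| ^ p) l' 1 := by
    induction n with
    | zero =>
      intro l' hl' _
      obtain rfl := List.length_eq_zero_iff.1 hl'
      simpa [sqSum, signAverage] using mul_haagerupPhi_sq_le (a := 0) hp hC (by simp)
    | succ n ih =>
      exact fun _ => mul_haagerupPhi_le_signAverage_succ hp hC0 hC
        fun _ => mul_haagerupPhi_le_signAverage_of_balanced hp' hC0 hbal ih
  exact mul_haagerupPhi_le_signAverage_of_balanced hp' hC0 hbal (hlt l.length) rfl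

lemma khintchine_of_balanced (hp : p ∈ Ioc 1 2) (hC0 : 0 ≤ C) (hC : C ≤ 2 ^ (p / 2 - 1))
    (hbal : ∀ l : List ℝ, (∀ a ∈ l, a ^ 2 ≤ sqSum l / 2) →
      C * sqSum l ^ (p / 2) ≤ signAverage (fun y => |y| ^ p) l 0) (l : List ℝ) :
    C * sqSum l ^ (p / 2) ≤ signAverage (fun y => |y| ^ p) l 0 := by
  have hp0 : 0 < p := by linarith [hp.1]
  by_cases h : ∀ a ∈ l, a = 0
  · refine hbal l fun a ha => ?_
    rw [h a ha]
    linarith [sqSum_nonneg l]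
  · push Not at h
    obtain ⟨a, ha, ha0⟩ := h
    have hperm := List.perm_cons_erase ha
    rw [sqSum_perm hperm, signAverage_perm _ hperm]
    exact mul_rpow_le_signAverage_cons ⟨hp0.le, hp.2⟩ hC0 ha0
      (mul_haagerupPhi_le_signAverage hp hC0 hC hbal _)

lemma gaussianAbsMoment_mul_rpow_le_of_balanced (hp : p ∈ Ico (3 / 2) 2)
    (hG : Gamma ((p + 1) / 2) ≤ √π / 2) {l : List ℝ} (hl : ∀ a ∈ l, a ^ 2 ≤ sqSum l / 2) :
    gaussianAbsMoment p * sqSum l ^ (p / 2) ≤ signAverage (fun y => |y| ^ p) l 0 := by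
  rcases (sqSum_nonneg l).eq_or_lt with hzero | hpos
  · rw [← hzero, zero_rpow (by linarith [hp.1]), mul_zero]
    exact signAverage_abs_rpow_nonneg p l 0
  have hs : 0 < √(sqSum l) := sqrt_pos.2 hpos
  have hunit : sqSum (l.map ((√(sqSum l))⁻¹ * ·)) = 1 := by
    rw [sqSum_map_mul, inv_pow, sq_sqrt hpos.le, inv_mul_cancel₀ hpos.ne']
  have h := gaussianAbsMoment_le_signAverage hp hG hunit (by
    simp only [List.forall_mem_map]
    intro a ha
    rw [mul_pow, inv_pow, sq_sqrt hpos.le, inv_mul_le_iff₀ hpos]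
    linarith [hl a ha])
  rw [← mul_zero (√(sqSum l))⁻¹, signAverage_abs_rpow_map_mul, abs_of_pos (inv_pos.2 hs),
    inv_rpow hs.le, sqrt_eq_rpow, ← rpow_mul hpos.le, one_div_mul_eq_div,
    le_inv_mul_iff₀ (rpow_pos_of_pos hpos _)] at h
  linarith

lemma gaussianAbsMoment_mul_rpow_le (hp : p ∈ Ico (3 / 2) 2) (hG : Gamma ((p + 1) / 2) ≤ √π / 2)
    (l : List ℝ) :
    gaussianAbsMoment p * sqSum l ^ (p / 2) ≤ signAverage (fun y => |y| ^ p) l 0 := by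
  have hp1 : 1 < p := by linarith [hp.1]
  refine khintchine_of_balanced ⟨hp1, hp.2.le⟩ (gaussianAbsMoment_pos (by linarith)).le ?_
    (fun _ => gaussianAbsMoment_mul_rpow_le_of_balanced hp hG) l
  rw [gaussianAbsMoment, rpow_sub two_pos, rpow_one, div_le_div_iff₀ (by positivity) two_pos]
  nlinarith [rpow_pos_of_pos two_pos (p / 2)]

end DominantCoefficient

section CriticalExponent

open Real Set Filter Topology

lemma Gamma_three_halves : Gamma (3 / 2) = √π / 2 := by
  rw [show (3 : ℝ) / 2 = 1 / 2 + 1 by norm_num, Gamma_add_one (by norm_num), Gamma_one_half_eq,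
    one_div_mul_eq_div]

lemma hasDerivAt_Gamma_add_one {x d : ℝ} (hx : x ≠ 0) (h : HasDerivAt Gamma d x) :
    HasDerivAt Gamma (Gamma x + x * d) (x + 1) := by
  have hshift : HasDerivAt (fun y => Gamma (y + 1)) (Gamma x + x * d) x := by
    refine (((hasDerivAt_id x).mul h).congr_deriv (by simp)).congr_of_eventuallyEq ?_
    filter_upwards [isOpen_ne.mem_nhds hx] with y hy using Gamma_add_one hy
  rw [← add_sub_cancel_right x 1] at hshift
  simpa using hshift.comp_sub_const (x + 1) 1

lemma eulerMascheroniConstant_add_two_mul_log_two_lt :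
    eulerMascheroniConstant + 2 * log 2 < 2 := by
  have h := eulerMascheroniConstant_lt_eulerMascheroniSeq' 16
  have hharmonic : ((harmonic 16 : ℚ) : ℝ) = 2436559 / 720720 := by
    rw [show harmonic 16 = 2436559 / 720720 by
      simp only [harmonic, Finset.sum_range_succ, Finset.sum_range_zero]; norm_num]
    norm_num
  rw [eulerMascheroniSeq', if_neg (by norm_num), hharmonic,
    show ((16 : ℕ) : ℝ) = 2 ^ 4 by norm_num, log_pow] at h
  have := log_two_gt_d9
  push_cast at h
  linarith

lemma exists_pos_hasDerivAt_Gamma_three_halves : ∃ d > 0, HasDerivAt Gamma d (3 / 2) := by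
  have h := hasDerivAt_Gamma_add_one (by norm_num) hasDerivAt_Gamma_one_half
  rw [show (1 : ℝ) / 2 + 1 = 3 / 2 by norm_num, Gamma_one_half_eq] at h
  refine ⟨_, ?_, h⟩
  nlinarith [mul_pos (sqrt_pos.2 pi_pos)
    (sub_pos.2 eulerMascheroniConstant_add_two_mul_log_two_lt)]

lemma exists_Gamma_lt_Gamma_three_halves {x : ℝ} (hx : x < 3 / 2) :
    ∃ y ∈ Ioo x (3 / 2), Gamma y < √π / 2 := by
  obtain ⟨d, hd, hderiv⟩ := exists_pos_hasDerivAt_Gamma_three_halves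
  have hslope : ∀ᶠ y in 𝓝[<] (3 / 2), 0 < slope Gamma (3 / 2) y :=
    ((hasDerivAt_iff_tendsto_slope.1 hderiv).eventually (lt_mem_nhds hd)).filter_mono
      (nhdsWithin_mono _ fun y hy => ne_of_lt hy)
  obtain ⟨y, hy, hmem⟩ := (hslope.and (Ioo_mem_nhdsLT hx)).exists
  exact ⟨y, hmem, Gamma_three_halves ▸ (slope_pos_iff_gt hmem.2).1 hy⟩

lemma exists_Gamma_eq_Gamma_three_halves {x : ℝ} (hx : x ∈ Ioo 0 (3 / 2))
    (hG : √π / 2 ≤ Gamma x) : ∃ y ∈ Ico x (3 / 2), Gamma y = √π / 2 := by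
  obtain ⟨z, hz, hlt⟩ := exists_Gamma_lt_Gamma_three_halves hx.2
  have hcont : ContinuousOn Gamma (Icc x z) := fun y hy =>
    (differentiableOn_Gamma_Ioi.differentiableAt
      (Ioi_mem_nhds (hx.1.trans_le hy.1))).continuousAt.continuousWithinAt
  obtain ⟨y, hy, hyG⟩ := intermediate_value_Icc' hz.1.le hcont ⟨hlt.le, hG⟩
  exact ⟨y, ⟨hy.1, hy.2.trans_lt hz.2⟩, hyG⟩

lemma sqrt_pi_div_two_le_Gamma_five_quarters : √π / 2 ≤ Gamma (5 / 4) := by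
  have hpos : 0 < Gamma (5 / 4) := Gamma_pos_of_pos (by norm_num)
  have hleft : Gamma (21 / 4) = 9945 / 256 * Gamma (5 / 4) := by
    rw [show (21 / 4 : ℝ) = 5 / 4 + 1 + 1 + 1 + 1 by norm_num, Gamma_add_one (by norm_num),
      Gamma_add_one (by norm_num), Gamma_add_one (by norm_num), Gamma_add_one (by norm_num)]
    ring
  have hmid : Gamma (11 / 2) = 945 / 16 * (√π / 2) := by
    rw [show (11 / 2 : ℝ) = 3 / 2 + 1 + 1 + 1 + 1 by norm_num, Gamma_add_one (by norm_num),
      Gamma_add_one (by norm_num), Gamma_add_one (by norm_num), Gamma_add_one (by norm_num),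
      Gamma_three_halves]
    ring
  have hright : Gamma 6 = 120 := by
    rw [show (6 : ℝ) = (5 : ℕ) + 1 by norm_num, Gamma_nat_eq_factorial]
    norm_num [Nat.factorial]
  have hcube : (945 / 16 * (√π / 2)) ^ 3 ≤ (9945 / 256 * Gamma (5 / 4)) ^ 2 * 120 := by
    have h := Gamma_mul_add_mul_le_rpow_Gamma_mul_rpow_Gamma (s := 21 / 4) (t := 6) (a := 2 / 3)
      (b := 1 / 3) (by norm_num) (by norm_num) (by norm_num) (by norm_num) (by norm_num)
    rw [show (2 / 3 * (21 / 4) + 1 / 3 * 6 : ℝ) = 11 / 2 by norm_num, hleft, hmid, hright] at h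
    refine (pow_le_pow_left₀ (by positivity) h 3).trans_eq ?_
    rw [mul_pow ((9945 / 256 * Gamma (5 / 4)) ^ (2 / 3 : ℝ)), ← rpow_mul_natCast (by positivity),
      ← rpow_mul_natCast (by norm_num)]
    norm_num
  have hsqrt : 0.88 < √π / 2 := by
    rw [lt_div_iff₀ two_pos]
    exact lt_sqrt_of_sq_lt (by linarith [pi_gt_d2])
  by_contra! hlt
  have hsq : Gamma (5 / 4) ^ 2 ≤ (√π / 2) ^ 2 := pow_le_pow_left₀ hpos.le hlt.le 2
  nlinarith [pow_pos (show 0 < √π / 2 by positivity) 2]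

lemma exists_critical_exponent {p : ℝ} (hp : p < 2)
    (hG : 3 / 2 ≤ p → √π / 2 ≤ Gamma ((p + 1) / 2)) :
    ∃ r ∈ Ico (max p (3 / 2)) 2, Gamma ((r + 1) / 2) = √π / 2 := by
  have hmax : √π / 2 ≤ Gamma ((max p (3 / 2) + 1) / 2) := by
    rcases le_total p (3 / 2) with h | h
    · rw [max_eq_right h, show ((3 : ℝ) / 2 + 1) / 2 = 5 / 4 by norm_num]
      exact sqrt_pi_div_two_le_Gamma_five_quarters
    · rw [max_eq_left h]
      exact hG h
  have hlt : max p (3 / 2) < 2 := max_lt hp (by norm_num)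
  obtain ⟨y, hy, hyG⟩ := exists_Gamma_eq_Gamma_three_halves
    ⟨by linarith [le_max_right p (3 / 2)], by linarith⟩ hmax
  exact ⟨2 * y - 1, ⟨by linarith [hy.1], by linarith [hy.2]⟩, by rwa [sub_add_cancel,
    mul_div_cancel_left₀ y two_ne_zero]⟩

end CriticalExponent

section Khintchine

open Real Set

lemma rpow_mul_rpow_add_rpow_mul_rpow_le {θ x₁ x₂ y₁ y₂ : ℝ} (hθ : θ ∈ Ioo 0 1) (hx₁ : 0 ≤ x₁)
    (hx₂ : 0 ≤ x₂) (hy₁ : 0 ≤ y₁) (hy₂ : 0 ≤ y₂) :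
    x₁ ^ θ * y₁ ^ (1 - θ) + x₂ ^ θ * y₂ ^ (1 - θ) ≤ (x₁ + x₂) ^ θ * (y₁ + y₂) ^ (1 - θ) := by
  have hθ1 : 1 - θ ≠ 0 := (sub_pos.2 hθ.2).ne'
  have h := inner_le_Lp_mul_Lq_of_nonneg Finset.univ (HolderConjugate.inv_one_sub_inv hθ.1 hθ.2)
    (f := ![x₁ ^ θ, x₂ ^ θ]) (g := ![y₁ ^ (1 - θ), y₂ ^ (1 - θ)])
    (by simp [Fin.forall_fin_two, rpow_nonneg, hx₁, hx₂])
    (by simp [Fin.forall_fin_two, rpow_nonneg, hy₁, hy₂])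
  simpa [rpow_rpow_inv, hx₁, hx₂, hy₁, hy₂, hθ.1.ne', hθ1] using h

lemma signAverage_rpow_mul_rpow_le {g h : ℝ → ℝ} (hg : ∀ x, 0 ≤ g x) (hh : ∀ x, 0 ≤ h x) {θ : ℝ}
    (hθ : θ ∈ Ioo 0 1) (l : List ℝ) (x : ℝ) :
    signAverage (fun y => g y ^ θ * h y ^ (1 - θ)) l x
      ≤ signAverage g l x ^ θ * signAverage h l x ^ (1 - θ) := by
  induction l generalizing x with
  | nil => exact le_rfl
  | cons a l ih =>
    have hg' := signAverage_nonneg hg l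
    have hh' := signAverage_nonneg hh l
    have hpair := rpow_mul_rpow_add_rpow_mul_rpow_le hθ (hg' (x + a)) (hg' (x - a)) (hh' (x + a))
      (hh' (x - a))
    simp only [signAverage]
    rw [div_rpow (add_nonneg (hg' _) (hg' _)) zero_le_two,
      div_rpow (add_nonneg (hh' _) (hh' _)) zero_le_two, div_mul_div_comm, ← rpow_add two_pos,
      add_sub_cancel, rpow_one]
    linarith [ih (x + a), ih (x - a)]

variable {p r : ℝ}

lemma signAverage_abs_rpow_interpolate (hp : 0 < p) (hpr : p < r) (hr : r < 2) (l : List ℝ)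
    (x : ℝ) :
    signAverage (fun y => |y| ^ r) l x ≤ signAverage (fun y => |y| ^ p) l x ^ ((2 - r) / (2 - p))
      * (x ^ 2 + sqSum l) ^ (1 - (2 - r) / (2 - p)) := by
  have hp2 : 0 < 2 - p := by linarith
  have hθ : (2 - r) / (2 - p) ∈ Ioo 0 1 :=
    ⟨div_pos (by linarith) hp2, (div_lt_one hp2).2 (by linarith)⟩
  have hexp : r = p * ((2 - r) / (2 - p)) + 2 * (1 - (2 - r) / (2 - p)) := by
    field_simp
    ring
  have hsplit : (fun y : ℝ => |y| ^ r) = fun y => (|y| ^ p) ^ ((2 - r) / (2 - p))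
      * (|y| ^ (2 : ℝ)) ^ (1 - (2 - r) / (2 - p)) := by
    ext y
    rw [← rpow_mul (abs_nonneg y), ← rpow_mul (abs_nonneg y),
      ← rpow_add' (abs_nonneg y) (by linarith), ← hexp]
  rw [← signAverage_abs_rpow_two, hsplit]
  exact signAverage_rpow_mul_rpow_le (fun y => rpow_nonneg (abs_nonneg y) p)
    (fun y => rpow_nonneg (abs_nonneg y) 2) hθ l x

lemma khintchine_of_exponent_le (hp : 0 < p) (hpr : p ≤ r) (hr : r < 2) {c : ℝ} (hc : 0 < c)
    {l : List ℝ}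
    (h : c ^ (r / 2 - 1) * sqSum l ^ (r / 2) ≤ signAverage (fun y => |y| ^ r) l 0) :
    c ^ (p / 2 - 1) * sqSum l ^ (p / 2) ≤ signAverage (fun y => |y| ^ p) l 0 := by
  rcases hpr.eq_or_lt with rfl | hlt
  · exact h
  have hnonneg := signAverage_abs_rpow_nonneg p l 0
  rcases (sqSum_nonneg l).eq_or_lt with hzero | hpos
  · rwa [← hzero, zero_rpow (by positivity), mul_zero]
  have hp2 : 0 < 2 - p := by linarith
  have hinterp := h.trans (signAverage_abs_rpow_interpolate hp hlt hr l 0)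
  set θ := (2 - r) / (2 - p) with hθ
  have hθ0 : 0 < θ := div_pos (by linarith) hp2
  have hθ2 : θ * (2 - p) = 2 - r := div_mul_cancel₀ _ hp2.ne'
  rw [zero_pow two_ne_zero, zero_add, show r / 2 - 1 = (p / 2 - 1) * θ by linarith,
    show r / 2 = p / 2 * θ + (1 - θ) by linarith, rpow_add hpos, rpow_mul hc.le, rpow_mul hpos.le,
    ← mul_assoc, ← mul_rpow (by positivity) (by positivity)] at hinterp
  exact (rpow_le_rpow_iff (by positivity) hnonneg hθ0).1
    (le_of_mul_le_mul_right hinterp (by positivity))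

/-- The optimal constant `A_p` in the lower Khintchine inequality. -/
noncomputable def khintchineConst (p : ℝ) : ℝ :=
  min (min 1 (2 ^ ((1 : ℝ) / 2 - 1 / p)))
    (2 ^ ((1 : ℝ) / 2) * (Gamma ((p + 1) / 2) / √π) ^ (1 / p))

lemma khintchineConst_nonneg (hp : -1 ≤ p) : 0 ≤ khintchineConst p := by
  have : 0 ≤ Gamma ((p + 1) / 2) := Gamma_nonneg_of_nonneg (by linarith)
  unfold khintchineConst
  positivity

lemma khintchineConst_le_one : khintchineConst p ≤ 1 :=
  (min_le_left _ _).trans (min_le_left _ _)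

lemma khintchineConst_rpow_le_two_rpow (hp : 0 < p) :
    khintchineConst p ^ p ≤ 2 ^ (p / 2 - 1) := by
  refine (rpow_le_rpow (khintchineConst_nonneg (by linarith))
    ((min_le_left _ _).trans (min_le_right _ _)) hp.le).trans_eq ?_
  rw [← rpow_mul two_pos.le]
  congr 1
  field_simp

lemma khintchineConst_rpow_le_gaussianAbsMoment (hp : 0 < p) :
    khintchineConst p ^ p ≤ gaussianAbsMoment p := by
  have : 0 < Gamma ((p + 1) / 2) := Gamma_pos_of_pos (by linarith)
  refine (rpow_le_rpow (khintchineConst_nonneg (by linarith)) (min_le_right _ _) hp.le).trans_eq ?_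
  rw [mul_rpow (by positivity) (by positivity), ← rpow_mul two_pos.le, ← rpow_mul (by positivity),
    one_div_mul_cancel hp.ne', rpow_one, gaussianAbsMoment, one_div_mul_eq_div, mul_div_assoc]

lemma khintchineConst_rpow_mul_le_signAverage (hp : p ∈ Ioo 0 2) (l : List ℝ) :
    khintchineConst p ^ p * sqSum l ^ (p / 2) ≤ signAverage (fun y => |y| ^ p) l 0 := by
  have hsum := rpow_nonneg (sqSum_nonneg l) (p / 2)
  by_cases hcase : 3 / 2 ≤ p ∧ Gamma ((p + 1) / 2) ≤ √π / 2
  · exact (mul_le_mul_of_nonneg_right (khintchineConst_rpow_le_gaussianAbsMoment hp.1) hsum).trans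
      (gaussianAbsMoment_mul_rpow_le ⟨hcase.1, hp.2⟩ hcase.2 l)
  · obtain ⟨r, hr, hrG⟩ := exists_critical_exponent hp.2
      fun h => (not_le.1 fun h' => hcase ⟨h, h'⟩).le
    have hmoment : gaussianAbsMoment r = 2 ^ (r / 2 - 1) := by
      rw [gaussianAbsMoment, hrG, rpow_sub two_pos, rpow_one]
      field_simp
    refine (mul_le_mul_of_nonneg_right (khintchineConst_rpow_le_two_rpow hp.1) hsum).trans
      (khintchine_of_exponent_le hp.1 ((le_max_left _ _).trans hr.1) hr.2 two_pos ?_)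
    rw [← hmoment]
    exact gaussianAbsMoment_mul_rpow_le ⟨(le_max_right _ _).trans hr.1, hr.2⟩ hrG.le l

end Khintchine

section OddSums

open Real Set

lemma signAverage_ofFn {n : ℕ} (g : ℝ → ℝ) (a : Fin n → ℝ) (y : ℝ) :
    signAverage g (List.ofFn a) y
      = (∑ ε : Fin n → Bool, g (y + ∑ i, (if ε i then 1 else -1) * a i)) / 2 ^ n := by
  induction n generalizing y with
  | zero => simp [signAverage]
  | succ n ih =>
    rw [List.ofFn_succ, signAverage, ih, ih,
      ← (Fin.consEquiv fun _ : Fin (n + 1) => Bool).sum_comp, Fintype.sum_prod_type,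
      Fintype.sum_bool]
    simp only [Fin.consEquiv, Equiv.coe_fn_mk, Fin.sum_univ_succ, Fin.cons_zero, Fin.cons_succ,
      if_true, Bool.false_eq_true, if_false, one_mul, neg_one_mul, ← add_assoc, ← sub_eq_add_neg]
    rw [pow_succ]
    field_simp

lemma sqSum_ofFn {n : ℕ} (a : Fin n → ℝ) : sqSum (List.ofFn a) = ∑ i, a i ^ 2 := by
  simp only [sqSum, List.map_ofFn, List.sum_ofFn, Function.comp_apply]

lemma rpow_sub_one_mul_le_rpow {q s V : ℝ} (hq : q ≤ 1) (hs : 0 ≤ s) (hV : s ≤ V) :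
    V ^ (q - 1) * s ≤ s ^ q := by
  rcases hs.eq_or_lt with rfl | hpos
  · rw [mul_zero]
    exact rpow_nonneg le_rfl q
  · calc V ^ (q - 1) * s ≤ s ^ (q - 1) * s :=
          mul_le_mul_of_nonneg_right (rpow_le_rpow_of_nonpos hpos hV (sub_nonpos.2 hq)) hs
      _ = s ^ q := by rw [rpow_sub_one hpos.ne', div_mul_cancel₀ _ hpos.ne']

lemma rpow_integral_le_integral_rpow {Ω : Type*} [MeasurableSpace Ω] {P : Measure Ω}
    [IsProbabilityMeasure P] {g : Ω → ℝ} {q : ℝ} (hq : 1 ≤ q) (hg : ∀ ω, 0 ≤ g ω)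
    (hint : Integrable g P) (hint_rpow : Integrable (fun ω => g ω ^ q) P) :
    (∫ ω, g ω ∂P) ^ q ≤ ∫ ω, g ω ^ q ∂P :=
  (convexOn_rpow hq).map_integral_le
    (continuousOn_id.rpow_const fun _ _ => Or.inr (zero_le_one.trans hq)) isClosed_Ici
    (ae_of_all _ hg) hint hint_rpow

variable {X ι : Type*} [MeasurableSpace X] {μ : Measure X} [Fintype ι] {f : X → ℝ} {σ : X → X}
  {p : ℝ}

lemma integrable_abs_sum_mul_rpow [IsFiniteMeasure μ] (hf : Measurable f) {C : ℝ}
    (hC : ∀ x, |f x| ≤ C) (hp : 0 ≤ p) (a : ι → ℝ) :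
    Integrable (fun x : ι → X => |∑ i, f (x i) * a i| ^ p) (.pi fun _ => μ) := by
  have hmeas : Measurable fun x : ι → X => |∑ i, f (x i) * a i| ^ p := by fun_prop
  refine .of_bound (C := (∑ i, C * |a i|) ^ p) hmeas.aestronglyMeasurable (ae_of_all _ fun x => ?_)
  rw [norm_eq_abs, abs_of_nonneg (by positivity)]
  refine rpow_le_rpow (abs_nonneg _) ((Finset.abs_sum_le_sum_abs _ _).trans ?_) hp
  refine Finset.sum_le_sum fun i _ => ?_
  rw [abs_mul]
  exact mul_le_mul_of_nonneg_right (hC _) (abs_nonneg _)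

lemma integral_comp_sum_sign_mul [SigmaFinite μ] (hf : Measurable f)
    (hσ : MeasurePreserving σ μ μ) (hodd : ∀ x, f (σ x) = -f x) {g : ℝ → ℝ} (hg : Measurable g)
    (v : ι → ℝ) (ε : ι → Bool) :
    ∫ x : ι → X, g (∑ i, (if ε i then 1 else -1) * (f (x i) * v i)) ∂(.pi fun _ => μ)
      = ∫ x : ι → X, g (∑ i, f (x i) * v i) ∂(.pi fun _ => μ) := by
  have hflip : MeasurePreserving (fun (x : ι → X) i => (if ε i then id else σ) (x i))
      (.pi fun _ => μ) (.pi fun _ => μ) := by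
    refine measurePreserving_pi (fun _ => μ) (fun _ => μ) fun i => ?_
    split_ifs
    exacts [.id μ, hσ]
  have hflip_apply (i : ι) (x : X) :
      f ((if ε i then id else σ) x) = (if ε i then 1 else -1) * f x := by
    split_ifs
    exacts [(one_mul _).symm, (hodd x).trans (neg_one_mul _).symm]
  have hmeas : Measurable fun x : ι → X => g (∑ i, f (x i) * v i) := by fun_prop
  conv_rhs => rw [← hflip.map_eq]
  rw [integral_map hflip.measurable.aemeasurable hmeas.aestronglyMeasurable]
  simp only [hflip_apply, mul_assoc]

lemma integrable_sq_of_abs_le [IsFiniteMeasure μ] (hf : Measurable f) {C : ℝ}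
    (hC : ∀ x, |f x| ≤ C) : Integrable (fun x => f x ^ 2) μ :=
  (MemLp.of_bound hf.aestronglyMeasurable C (ae_of_all _ hC)).integrable_sq

variable [IsProbabilityMeasure μ]

lemma integrable_sum_mul_sq (hf : Integrable (fun x => f x ^ 2) μ) (v : ι → ℝ) :
    Integrable (fun x : ι → X => ∑ i, (f (x i) * v i) ^ 2) (.pi fun _ => μ) := by
  have h_eval (i : ι) : Integrable (fun x : ι → X => f (x i) ^ 2) (.pi fun _ => μ) :=
    integrable_comp_eval (μ := fun _ => μ) (f := fun x => f x ^ 2) hf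
  simp only [mul_pow]
  exact integrable_finsetSum _ fun i _ => (h_eval i).mul_const _

lemma integral_sum_mul_sq (hf : Integrable (fun x => f x ^ 2) μ) (v : ι → ℝ) :
    ∫ x : ι → X, ∑ i, (f (x i) * v i) ^ 2 ∂(.pi fun _ => μ)
      = (∫ x, f x ^ 2 ∂μ) * ∑ i, v i ^ 2 := by
  have h_eval (i : ι) : Integrable (fun x : ι → X => f (x i) ^ 2) (.pi fun _ => μ) :=
    integrable_comp_eval (μ := fun _ => μ) (f := fun x => f x ^ 2) hf
  simp only [mul_pow]
  rw [integral_finsetSum _ fun i _ => (h_eval i).mul_const _, Finset.mul_sum]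
  refine Finset.sum_congr rfl fun i _ => ?_
  rw [integral_mul_const, integral_comp_eval (μ := fun _ => μ) (f := fun x => f x ^ 2)
    hf.aestronglyMeasurable]

variable {n : ℕ}

lemma integrable_signAverage_abs_rpow (hf : Measurable f) {C : ℝ} (hC : ∀ x, |f x| ≤ C)
    (hp : 0 ≤ p) (v : Fin n → ℝ) :
    Integrable (fun x : Fin n → X =>
      signAverage (fun y => |y| ^ p) (List.ofFn fun i => f (x i) * v i) 0) (.pi fun _ => μ) := by
  simp only [signAverage_ofFn, zero_add, mul_left_comm _ (f _)]
  exact (integrable_finsetSum _ fun ε _ => integrable_abs_sum_mul_rpow hf hC hp _).div_const _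

lemma integral_signAverage_abs_rpow (hf : Measurable f) {C : ℝ} (hC : ∀ x, |f x| ≤ C)
    (hσ : MeasurePreserving σ μ μ) (hodd : ∀ x, f (σ x) = -f x) (hp : 0 ≤ p) (v : Fin n → ℝ) :
    ∫ x : Fin n → X, signAverage (fun y => |y| ^ p) (List.ofFn fun i => f (x i) * v i) 0
        ∂(.pi fun _ => μ)
      = ∫ x : Fin n → X, |∑ i, f (x i) * v i| ^ p ∂(.pi fun _ => μ) := by
  have hint (ε : Fin n → Bool) : Integrable (fun x : Fin n → X =>
      |∑ i, (if ε i then 1 else -1) * (f (x i) * v i)| ^ p) (.pi fun _ => μ) := by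
    simp only [mul_left_comm _ (f _)]
    exact integrable_abs_sum_mul_rpow hf hC hp _
  have hflip (ε : Fin n → Bool) := integral_comp_sum_sign_mul (g := fun y => |y| ^ p) hf hσ hodd
    (by fun_prop) v ε
  simp only [signAverage_ofFn, zero_add]
  rw [integral_div, integral_finsetSum _ fun ε _ => hint ε]
  simp only [hflip, Finset.sum_const, Finset.card_univ, Fintype.card_pi, Fintype.card_bool,
    Finset.prod_const, Fintype.card_fin, nsmul_eq_mul, Nat.cast_pow, Nat.cast_ofNat]
  exact mul_div_cancel_left₀ _ (by positivity)

lemma integral_abs_sum_mul_rpow_two (hf : Measurable f) {C : ℝ} (hC : ∀ x, |f x| ≤ C)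
    (hσ : MeasurePreserving σ μ μ) (hodd : ∀ x, f (σ x) = -f x) (v : Fin n → ℝ) :
    ∫ x : Fin n → X, |∑ i, f (x i) * v i| ^ (2 : ℝ) ∂(.pi fun _ => μ)
      = (∫ x, f x ^ 2 ∂μ) * ∑ i, v i ^ 2 := by
  rw [← integral_signAverage_abs_rpow hf hC hσ hodd two_pos.le,
    ← integral_sum_mul_sq (integrable_sq_of_abs_le hf hC)]
  simp only [signAverage_abs_rpow_two, sqSum_ofFn, zero_pow two_ne_zero, zero_add]

lemma mul_rpow_le_integral_abs_sum_mul_rpow_of_two_le (hf : Measurable f) {C : ℝ}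
    (hC : ∀ x, |f x| ≤ C) (hσ : MeasurePreserving σ μ μ) (hodd : ∀ x, f (σ x) = -f x)
    (hp : 2 ≤ p) (v : Fin n → ℝ) :
    ((∫ x, f x ^ 2 ∂μ) * ∑ i, v i ^ 2) ^ (p / 2)
      ≤ ∫ x : Fin n → X, |∑ i, f (x i) * v i| ^ p ∂(.pi fun _ => μ) := by
  have hpow (x : Fin n → X) :
      (|∑ i, f (x i) * v i| ^ (2 : ℝ)) ^ (p / 2) = |∑ i, f (x i) * v i| ^ p := by
    rw [← rpow_mul (abs_nonneg _), mul_div_cancel₀ p two_ne_zero]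
  rw [← integral_abs_sum_mul_rpow_two hf hC hσ hodd]
  refine (rpow_integral_le_integral_rpow (by linarith) (fun _ => by positivity)
    (integrable_abs_sum_mul_rpow hf hC two_pos.le v) ?_).trans_eq ?_
  · simpa only [hpow] using integrable_abs_sum_mul_rpow hf hC (by linarith) v
  · simp only [hpow]

lemma khintchineConst_rpow_mul_le_integral (hf : Measurable f)
    (hbound : ∀ x, |f x| ≤ 1) (hσ : MeasurePreserving σ μ μ) (hodd : ∀ x, f (σ x) = -f x)
    (hp : p ∈ Ioo 0 2) (v : Fin n → ℝ) :
    khintchineConst p ^ p * ((∫ x, f x ^ 2 ∂μ) * (∑ i, v i ^ 2) ^ (p / 2))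
      ≤ ∫ x : Fin n → X, |∑ i, f (x i) * v i| ^ p ∂(.pi fun _ => μ) := by
  set V := ∑ i, v i ^ 2 with hV
  have hV0 : 0 ≤ V := Finset.sum_nonneg fun i _ => sq_nonneg _
  have hsq := integrable_sq_of_abs_le (μ := μ) hf hbound
  have hA : 0 ≤ khintchineConst p ^ p :=
    rpow_nonneg (khintchineConst_nonneg (by linarith [hp.1])) p
  have hVpow : V ^ (p / 2) = V ^ (p / 2 - 1) * V := by
    rcases hV0.eq_or_lt with h | h
    · rw [← h, mul_zero, zero_rpow (by linarith [hp.1])]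
    · rw [rpow_sub_one h.ne', div_mul_cancel₀ _ h.ne']
  have hcond (x : Fin n → X) : khintchineConst p ^ p * (V ^ (p / 2 - 1) *
      ∑ i, (f (x i) * v i) ^ 2)
        ≤ signAverage (fun y => |y| ^ p) (List.ofFn fun i => f (x i) * v i) 0 := by
    refine le_trans ?_ (khintchineConst_rpow_mul_le_signAverage hp _)
    rw [sqSum_ofFn]
    refine mul_le_mul_of_nonneg_left (rpow_sub_one_mul_le_rpow (by linarith [hp.2])
      (Finset.sum_nonneg fun i _ => sq_nonneg _) (Finset.sum_le_sum fun i _ => ?_)) hA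
    rw [mul_pow]
    exact mul_le_of_le_one_left (sq_nonneg _) ((sq_le_one_iff_abs_le_one _).2 (hbound _))
  rw [← integral_signAverage_abs_rpow hf hbound hσ hodd hp.1.le, hVpow, mul_left_comm (∫ _, _ ∂_),
    hV, ← integral_sum_mul_sq hsq, ← integral_const_mul, ← integral_const_mul]
  exact integral_mono (((integrable_sum_mul_sq hsq v).const_mul _).const_mul _)
    (integrable_signAverage_abs_rpow hf hbound hp.1.le v) hcond

lemma rpow_half_mul_rpow_half_le_rpow_integral (hf : Measurable f) {C : ℝ}
    (hC : ∀ x, |f x| ≤ C) (hσ : MeasurePreserving σ μ μ) (hodd : ∀ x, f (σ x) = -f x)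
    (hp : 2 ≤ p) (v : Fin n → ℝ) :
    (∫ x, f x ^ 2 ∂μ) ^ ((1 : ℝ) / 2) * (∑ i, v i ^ 2) ^ ((1 : ℝ) / 2)
      ≤ (∫ x : Fin n → X, |∑ i, f (x i) * v i| ^ p ∂(.pi fun _ => μ)) ^ (1 / p) := by
  have hI : 0 ≤ ∫ x, f x ^ 2 ∂μ := integral_nonneg fun _ => sq_nonneg _
  have hV : 0 ≤ ∑ i, v i ^ 2 := Finset.sum_nonneg fun i _ => sq_nonneg _
  have hexp : p / 2 * (1 / p) = 1 / 2 := by field_simp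
  rw [← mul_rpow hI hV, ← hexp, rpow_mul (mul_nonneg hI hV)]
  exact rpow_le_rpow (by positivity)
    (mul_rpow_le_integral_abs_sum_mul_rpow_of_two_le hf hC hσ hodd hp v) (by positivity)

lemma khintchineConst_mul_le_rpow_integral (hf : Measurable f)
    (hbound : ∀ x, |f x| ≤ 1) (hσ : MeasurePreserving σ μ μ) (hodd : ∀ x, f (σ x) = -f x)
    (hp : p ∈ Ioo 0 2) (v : Fin n → ℝ) :
    khintchineConst p * (∫ x, f x ^ 2 ∂μ) ^ (1 / p) * (∑ i, v i ^ 2) ^ ((1 : ℝ) / 2)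
      ≤ (∫ x : Fin n → X, |∑ i, f (x i) * v i| ^ p ∂(.pi fun _ => μ)) ^ (1 / p) := by
  have hp0 : 0 < p := hp.1
  have hA : 0 ≤ khintchineConst p := khintchineConst_nonneg (by linarith)
  have hI : 0 ≤ ∫ x, f x ^ 2 ∂μ := integral_nonneg fun _ => sq_nonneg _
  have hV : 0 ≤ ∑ i, v i ^ 2 := Finset.sum_nonneg fun i _ => sq_nonneg _
  have hexp : p / 2 * (1 / p) = 1 / 2 := by field_simp
  have hroot := rpow_le_rpow (by positivity)
    (khintchineConst_rpow_mul_le_integral hf hbound hσ hodd hp v) (one_div_nonneg.2 hp0.le)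
  rwa [mul_rpow (by positivity) (by positivity), mul_rpow hI (by positivity), ← rpow_mul hA,
    ← rpow_mul hV, mul_one_div_cancel hp0.ne', rpow_one, hexp, ← mul_assoc] at hroot

end OddSums

section OddIndicator

open Set

variable {X : Type*} {neg : X → X} {S : Set X}

/-- The odd function `1_S - 1_{-S}`, where `neg` plays the role of `x ↦ -x`. -/
noncomputable def oddIndicator (neg : X → X) (S : Set X) (x : X) : ℝ :=
  S.indicator (fun _ => 1) x - (neg ⁻¹' S).indicator (fun _ => 1) x

lemma oddIndicator_neg (hneg : neg.Involutive) (S : Set X) (x : X) :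
    oddIndicator neg S (neg x) = -oddIndicator neg S x := by
  have hcomp (y : X) :
      (neg ⁻¹' S).indicator (fun _ => (1 : ℝ)) y = S.indicator (fun _ => 1) (neg y) :=
    indicator_comp_right neg (g := fun _ => 1)
  rw [oddIndicator, oddIndicator, hcomp, hcomp, hneg x, neg_sub]

lemma abs_oddIndicator_le_one (neg : X → X) (S : Set X) (x : X) : |oddIndicator neg S x| ≤ 1 := by
  simp only [oddIndicator, indicator]
  split_ifs <;> norm_num

lemma oddIndicator_sq (hdisj : Disjoint S (neg ⁻¹' S)) (x : X) :
    oddIndicator neg S x ^ 2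
      = S.indicator (fun _ => 1) x + (neg ⁻¹' S).indicator (fun _ => 1) x := by
  by_cases h₁ : x ∈ S
  · simp [oddIndicator, h₁, disjoint_left.1 hdisj h₁]
  · by_cases h₂ : x ∈ neg ⁻¹' S <;> simp [oddIndicator, h₁, h₂]

variable [MeasurableSpace X]

lemma measurable_oddIndicator (hneg : Measurable neg) (hS : MeasurableSet S) :
    Measurable (oddIndicator neg S) :=
  (measurable_const.indicator hS).sub (measurable_const.indicator (hneg hS))

lemma integral_oddIndicator_sq {μ : Measure X} [IsFiniteMeasure μ]
    (hneg : MeasurePreserving neg μ μ) (hS : MeasurableSet S)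
    (hdisj : Disjoint S (neg ⁻¹' S)) :
    ∫ x, oddIndicator neg S x ^ 2 ∂μ = 2 * (μ S).toReal := by
  have hS' := hneg.measurable hS
  simp only [oddIndicator_sq hdisj]
  rw [integral_add ((integrable_const _).indicator hS) ((integrable_const _).indicator hS'),
    integral_indicator_const _ hS, integral_indicator_const _ hS', measureReal_def,
    measureReal_def, hneg.measure_preimage hS.nullMeasurableSet, smul_eq_mul, mul_one, two_mul]

end OddIndicator

theorem stmt15_general {X : Type*} [MeasurableSpace X] (μ : Measure X) [IsProbabilityMeasure μ]
    (neg : X → X) (hneg_inv : Function.Involutive neg) (hneg_mp : MeasurePreserving neg μ μ)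
    (S : Set X) (hS : MeasurableSet S) (hdisj : S ∩ neg ⁻¹' S = ∅)
    (n : ℕ) (v : Fin n → ℝ) (p : ℝ) (hp : 0 < p) :
    (2 ≤ p →
      (min (min 1 (2 ^ ((1 : ℝ) / 2 - 1 / p)))
          (2 ^ ((1 : ℝ) / 2) * (Real.Gamma ((p + 1) / 2) / Real.sqrt Real.pi) ^ (1 / p))) *
          (2 * (μ S).toReal) ^ ((1 : ℝ) / 2) * (∑ i, v i ^ 2) ^ ((1 : ℝ) / 2) ≤
        (∫ x : Fin n → X,
            |∑ i, (Set.indicator S (fun _ => (1 : ℝ)) (x i) -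
                Set.indicator (neg ⁻¹' S) (fun _ => (1 : ℝ)) (x i)) * v i| ^ p
            ∂(Measure.pi fun _ => μ)) ^ (1 / p)) ∧
    (p ≤ 2 →
      (min (min 1 (2 ^ ((1 : ℝ) / 2 - 1 / p)))
          (2 ^ ((1 : ℝ) / 2) * (Real.Gamma ((p + 1) / 2) / Real.sqrt Real.pi) ^ (1 / p))) *
          (2 * (μ S).toReal) ^ ((1 : ℝ) / p) * (∑ i, v i ^ 2) ^ ((1 : ℝ) / 2) ≤
        (∫ x : Fin n → X,
            |∑ i, (Set.indicator S (fun _ => (1 : ℝ)) (x i) -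
                Set.indicator (neg ⁻¹' S) (fun _ => (1 : ℝ)) (x i)) * v i| ^ p
            ∂(Measure.pi fun _ => μ)) ^ (1 / p)) := by
  rw [← khintchineConst,
    ← integral_oddIndicator_sq hneg_mp hS (Set.disjoint_iff_inter_eq_empty.2 hdisj)]
  have hmeas : Measurable (oddIndicator neg S) := measurable_oddIndicator hneg_mp.measurable hS
  have hbound := abs_oddIndicator_le_one neg S
  have hodd := oddIndicator_neg hneg_inv S
  have h_two_le (h : 2 ≤ p) :=
    (mul_le_of_le_one_left (by positivity) (khintchineConst_le_one (p := p))).trans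
      (rpow_half_mul_rpow_half_le_rpow_integral hmeas hbound hneg_mp hodd h v)
  simp only [← mul_assoc] at h_two_le
  refine ⟨h_two_le, fun h => ?_⟩
  rcases h.eq_or_lt with rfl | hlt
  · exact h_two_le le_rfl
  · exact khintchineConst_mul_le_rpow_integral hmeas hbound hneg_mp hodd ⟨hp, hlt⟩ v

theorem stmt15 {X : Type*} [MeasurableSpace X] (μ : Measure X) [IsProbabilityMeasure μ]
    (neg : X → X) (hneg_inv : Function.Involutive neg) (hneg_mp : MeasurePreserving neg μ μ)
    (S : Set X) (hS : MeasurableSet S) (hdisj : S ∩ neg ⁻¹' S = ∅)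
    (n : ℕ) (v : Fin n → ℝ) (p : ℝ) (hp : 1 ≤ p) :
    (2 ≤ p →
      (min (min 1 (2 ^ ((1 : ℝ) / 2 - 1 / p)))
          (2 ^ ((1 : ℝ) / 2) * (Real.Gamma ((p + 1) / 2) / Real.sqrt Real.pi) ^ (1 / p))) *
          (2 * (μ S).toReal) ^ ((1 : ℝ) / 2) * (∑ i, v i ^ 2) ^ ((1 : ℝ) / 2) ≤
        (∫ x : Fin n → X,
            |∑ i, (Set.indicator S (fun _ => (1 : ℝ)) (x i) -
                Set.indicator (neg ⁻¹' S) (fun _ => (1 : ℝ)) (x i)) * v i| ^ p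
            ∂(Measure.pi fun _ => μ)) ^ (1 / p)) ∧
    (p ≤ 2 →
      (min (min 1 (2 ^ ((1 : ℝ) / 2 - 1 / p)))
          (2 ^ ((1 : ℝ) / 2) * (Real.Gamma ((p + 1) / 2) / Real.sqrt Real.pi) ^ (1 / p))) *
          (2 * (μ S).toReal) ^ ((1 : ℝ) / p) * (∑ i, v i ^ 2) ^ ((1 : ℝ) / 2) ≤
        (∫ x : Fin n → X,
            |∑ i, (Set.indicator S (fun _ => (1 : ℝ)) (x i) -
                Set.indicator (neg ⁻¹' S) (fun _ => (1 : ℝ)) (x i)) * v i| ^ p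
            ∂(Measure.pi fun _ => μ)) ^ (1 / p)) :=
  stmt15_general μ neg hneg_inv hneg_mp S hS hdisj n v p (by linarith)
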